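/- Let Δ(n) := sup_{u ∈ ℝ} #{d : d | n, e^u < d ≤ e^{u+1}} and s(x) := (1/x)·∑_{n ≤ x} Δ(n). Then there exist constants c′ > 0 and c > 0 such that for all sufficiently large x: c′·log log x ≤ s(x) ≤ exp(c·√(log log x · log log log x)). -/

import Mathlib

/-!
The upper bound. Writing `n = a² b` with `b` squarefree and weighting by `log n`
(`log_mul_sum_le`), the average of `Δ` is controlled by `(log x)⁻¹ ∑ Δ(m) / m` over squarefree
`m ≤ x`; Rankin's trick replaces `1 / m` by `m ^ (-σ)` with `σ = 1 + 1 / log x` (`sqfSum_le`).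
A squarefree `m` is a finite set `A` of primes. Rounding each `log p` down to an integer `cell p`
costs at most `#A` in the logarithm of a divisor, hence `Δ(m) ≤ (#A + 1) max_k cnt A k`, where
`cnt A k` counts the subsets of `A` whose cells add up to `k` (`hooleyDelta_prod_le`). The maximum
is at most the `ℓ^q` norm of `cnt A`, and the factor `#A + 1` is at most `q (1 + 1 / q) ^ #A`. This
leaves the Dirichlet polynomial `S(σ) = ∑ tnrm(A) ∏ p ^ (-σ)` (`dser`).

Adjoining a prime `p` to `A` adds to `cnt A` its translate by `cell p`, so the `q`-th moment becomes
at most twice the old one plus correlations of `cnt A` with its translate (`mom_insert_le`). Averaged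
over `p` with Chebyshev's bound in each cell, the correlations decouple (`sum_corr_le`), so on
average the norm grows by a factor `1 + O(1 / q)` only (`sum_nrm_insert_le`). Since minus the
derivative of `S` is a sum over pairs of a set and one adjoined prime, this is a differential inequality for `S`
(`neg_deriv_dser_le`). Integrating it from `σ = 2`, with `exp (∑ p ^ (-σ)) ≤ 2 / (σ - 1)`, gives
`S(1 + δ) ≤ (4 / δ) (8 q) ^ q δ ^ (-C / q)` (`dser_le`). With `δ = 1 / log x` and `q` of order
`√(t / log t)`, where `t = log log x`, both `q log q` and `t / q` are `O(√(t log t))`.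

The lower bound. Every divisor of `n` has at most `3 Δ(n)` divisors of `n` within a factor `e`, so
`3 Δ(n) τ(n)` is at least the number of near pairs of divisors. Grouping these as `(g a, g b)` with
`a, b` coprime and averaging over `n` bounds `s(x)` from below by the sum of `1 / (a b τ(a) τ(b))`
over coprime near pairs `a, b ≤ √x` (`sum_coprime_le`), and coprimality may be dropped because
`∑ 1 / g²` converges (`sum_near_le`). Splitting by `⌊log a⌋ = k`, what remains is at least
`∑ s_k²` with `s_k = ∑ 1 / (a τ(a))` over the `k`-th block. Since `1 / (n τ(n))` convolved with itself
is `1 / n` on squarefree `n`, the partial sums satisfy `∑_{k < m} s_k ≫ √m` (`le_sum_sk`), and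
Cauchy–Schwarz against `1 / √(k + 1)` yields `∑_{k < K} s_k² ≫ log K` (`log_le_sum_sq`), with `K` of
order `log x`.
-/

open Filter Topology
open scoped Classical

/-- The Erdős–Hooley Delta-function
`Δ(n) = sup_u #{d ∣ n : e^u < d ≤ e^{u+1}}`. -/
noncomputable def hooleyDelta (n : ℕ) : ℕ :=
  sSup {k : ℕ | ∃ u : ℝ,
    k = ((n.divisors).filter
      (fun d => Real.exp u < (d : ℝ) ∧ (d : ℝ) ≤ Real.exp (u + 1))).card}

/-- `s(x) = (1/x) ∑_{n ≤ x} Δ(n)`. -/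
noncomputable def sAvg (x : ℕ) : ℝ :=
  (∑ n ∈ Finset.Icc 1 x, (hooleyDelta n : ℝ)) / x

/-! ### Elementary properties of `Δ` -/

/-- Comparison of sums along an injection of the index sets. -/
lemma sum_le_sum_inj {α β : Type*} {s : Finset α} {t : Finset β} (i : α → β)
    (hi : ∀ a ∈ s, i a ∈ t) (hinj : Set.InjOn i s) {f : α → ℝ} {g : β → ℝ}
    (hfg : ∀ a ∈ s, f a ≤ g (i a)) (hg : ∀ b ∈ t, 0 ≤ g b) :
    ∑ a ∈ s, f a ≤ ∑ b ∈ t, g b := by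
  calc ∑ a ∈ s, f a ≤ ∑ a ∈ s, g (i a) := Finset.sum_le_sum hfg
    _ = ∑ b ∈ s.image i, g b := (Finset.sum_image hinj).symm
    _ ≤ _ := Finset.sum_le_sum_of_subset_of_nonneg (Finset.image_subset_iff.2 hi)
        fun b hb _ => hg b hb

/-- The divisors of `n` in the window `(e^u, e^(u+1)]`. -/
noncomputable def win (n : ℕ) (u : ℝ) : Finset ℕ :=
  n.divisors.filter (fun d => Real.exp u < (d : ℝ) ∧ (d : ℝ) ≤ Real.exp (u + 1))

/-- In the definition of `hooleyDelta` the divisors are viewed as a finite set of real numbers;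
since the coercion is injective this does not change the count. -/
lemma hooleyDelta_eq (n : ℕ) : hooleyDelta n = sSup {k : ℕ | ∃ u : ℝ, k = (win n u).card} := by
  unfold hooleyDelta win
  congr 1
  ext k
  refine exists_congr fun u => ?_
  have e : (do let a ← n.divisors; pure (a : ℝ)) = n.divisors.image (Nat.cast : ℕ → ℝ) := by
    ext y
    simp [eq_comm]
  rw [e, Finset.filter_image, Finset.card_image_of_injective _ Nat.cast_injective]

lemma card_win_le_hooleyDelta (n : ℕ) (u : ℝ) : (win n u).card ≤ hooleyDelta n := by
  rw [hooleyDelta_eq]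
  refine le_csSup ⟨n.divisors.card, ?_⟩ ⟨u, rfl⟩
  rintro k ⟨v, rfl⟩
  exact Finset.card_filter_le _ _

lemma hooleyDelta_le {n K : ℕ} (h : ∀ u, (win n u).card ≤ K) : hooleyDelta n ≤ K := by
  rw [hooleyDelta_eq]
  refine csSup_le ⟨_, 0, rfl⟩ ?_
  rintro k ⟨v, rfl⟩
  exact h v

lemma mem_win {n d : ℕ} {u : ℝ} : d ∈ win n u ↔
    (d ∣ n ∧ n ≠ 0) ∧ u < Real.log d ∧ Real.log d ≤ u + 1 := by
  unfold win
  rw [Finset.mem_filter, Nat.mem_divisors]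
  refine and_congr_right fun h => ?_
  have hd : (0 : ℝ) < d := by exact_mod_cast Nat.pos_of_dvd_of_pos h.1 (Nat.pos_of_ne_zero h.2)
  rw [Real.lt_log_iff_exp_lt hd, Real.log_le_iff_le_exp hd]

/-- `Δ(mn) ≤ τ(m) Δ(n)`: a divisor of `mn` is a product `a b` with `a ∣ m`, `b ∣ n`, and for
fixed `a` the factor `b` is confined to a translated window. -/
lemma hooleyDelta_mul_le {m n : ℕ} :
    hooleyDelta (m * n) ≤ m.divisors.card * hooleyDelta n := by
  refine hooleyDelta_le fun u => ?_
  have hsub : win (m * n) u ⊆ m.divisors.biUnion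
      fun d => (win n (u - Real.log d)).image (d * ·) := by
    intro d hd
    rw [mem_win] at hd
    obtain ⟨⟨h1, h2⟩, h3, h4⟩ := hd
    obtain ⟨a, b, ha, hb, rfl⟩ := exists_dvd_and_dvd_of_dvd_mul h1
    have hm : m ≠ 0 := left_ne_zero_of_mul h2
    have hn : n ≠ 0 := right_ne_zero_of_mul h2
    have ha0 : a ≠ 0 := fun h => hm (by simpa [h] using ha)
    have hb0 : b ≠ 0 := fun h => hn (by simpa [h] using hb)
    rw [Nat.cast_mul, Real.log_mul (by exact_mod_cast ha0) (by exact_mod_cast hb0)] at h3 h4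
    simp only [Finset.mem_biUnion, Finset.mem_image]
    refine ⟨a, Nat.mem_divisors.2 ⟨ha, hm⟩, b, mem_win.2 ⟨⟨hb, hn⟩, ?_, ?_⟩, rfl⟩ <;> linarith
  refine (Finset.card_le_card hsub).trans (Finset.card_biUnion_le_card_mul _ _ _ fun d _ => ?_)
  exact Finset.card_image_le.trans (card_win_le_hooleyDelta _ _)

lemma card_divisors_mul_le (m n : ℕ) :
    (m * n).divisors.card ≤ m.divisors.card * n.divisors.card := by
  rw [Nat.divisors_mul]
  exact Finset.card_mul_le

/-- Nonnegative sums over `n` are at most the sums over all representations `n = a² b`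
with `b` squarefree. -/
lemma sum_le_sum_sq_mul (x : ℕ) {F : ℕ → ℝ} (hF : ∀ n, 0 ≤ F n) :
    ∑ n ∈ Finset.Icc 1 x, F n ≤ ∑ a ∈ Finset.Icc 1 x,
      ∑ b ∈ (Finset.Icc 1 (x / a ^ 2)).filter Squarefree, F (a ^ 2 * b) := by
  choose a b h using fun n : ℕ => Nat.sq_mul_squarefree n
  rw [Finset.sum_sigma']
  refine sum_le_sum_inj (fun n => ⟨b n, a n⟩) ?_ ?_ ?_ fun _ _ => hF _
  · intro n hn
    rw [Finset.mem_Icc] at hn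
    have hab := (h n).1
    have hb : b n ≠ 0 := fun h0 => by rw [h0] at hab; simp at hab; omega
    have ha : a n ≠ 0 := fun h0 => by rw [h0] at hab; simp at hab; omega
    simp only [Finset.mem_sigma, Finset.mem_Icc, Finset.mem_filter]
    refine ⟨⟨by omega, ?_⟩, ⟨by omega, ?_⟩, (h n).2⟩
    · have : b n ≤ b n ^ 2 * a n := by
        calc b n ≤ b n * (b n * a n) := Nat.le_mul_of_pos_right _ (by positivity)
          _ = _ := by ring
      omega
    · rw [Nat.le_div_iff_mul_le (by positivity), mul_comm, hab]
      exact hn.2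
  · intro n _ m _ hnm
    simp only [Sigma.mk.injEq, heq_eq_eq] at hnm
    rw [← (h n).1, ← (h m).1, hnm.1, hnm.2]
  · intro n _
    show F n ≤ F (b n ^ 2 * a n)
    rw [(h n).1]

/-- Dirichlet convolution: a sum over `d ∣ n ≤ x` is at most the full product. -/
lemma sum_divisors_le (x : ℕ) {f g : ℕ → ℝ} (hf : ∀ n, 0 ≤ f n) (hg : ∀ n, 0 ≤ g n) :
    ∑ n ∈ Finset.Icc 1 x, ∑ d ∈ n.divisors, f d * g (n / d) ≤
      (∑ n ∈ Finset.Icc 1 x, f n) * ∑ n ∈ Finset.Icc 1 x, g n := by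
  rw [Finset.sum_mul_sum, Finset.sum_sigma', ← Finset.sum_product']
  refine sum_le_sum_inj (fun w => (w.2, w.1 / w.2)) ?_ ?_ (fun _ _ => le_rfl)
    fun _ _ => mul_nonneg (hf _) (hg _)
  · rintro ⟨n, d⟩ h
    simp only [Finset.mem_sigma, Finset.mem_Icc, Nat.mem_divisors, Finset.mem_product] at h ⊢
    have hd := Nat.le_of_dvd (by omega) h.2.1
    have hd0 := Nat.pos_of_dvd_of_pos h.2.1 (by omega)
    have := Nat.div_le_self n d
    have := Nat.div_pos hd hd0
    omega
  · rintro ⟨n, d⟩ h ⟨n', d'⟩ h' heq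
    simp only [Finset.coe_sigma, Set.mem_sigma_iff, Finset.mem_coe, Finset.mem_Icc,
      Nat.mem_divisors, Prod.mk.injEq] at h h' heq
    obtain ⟨rfl, h2⟩ := heq
    have e1 := Nat.div_mul_cancel h.2.1
    have e2 := Nat.div_mul_cancel h'.2.1
    rw [h2] at e1
    have : n = n' := e1.symm.trans e2
    subst this
    rfl

/-! ### Moments of the divisor count and adjoining a prime -/

/-- The integer part of `log p`. -/
noncomputable def cell (p : ℕ) : ℕ := ⌊Real.log p⌋₊

/-- The number of subsets `B` of `A` with `∑ p ∈ B, cell p = k`. For a finite set `A` of primes this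
is the number of divisors of `∏ p ∈ A, p` whose logarithm, discretised prime by prime, equals `k`. -/
noncomputable def cnt (A : Finset ℕ) (k : ℕ) : ℝ :=
  ∑ B ∈ A.powerset, if ∑ p ∈ B, cell p = k then 1 else 0

/-- The `q`-th moment of `cnt A` over the cells `k < N`. -/
noncomputable def mom (N q : ℕ) (A : Finset ℕ) : ℝ := ∑ k ∈ Finset.range N, cnt A k ^ q

lemma cnt_nonneg (A : Finset ℕ) (k : ℕ) : 0 ≤ cnt A k :=
  Finset.sum_nonneg fun _ _ => by split_ifs <;> norm_num

lemma mom_nonneg (N q : ℕ) (A : Finset ℕ) : 0 ≤ mom N q A :=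
  Finset.sum_nonneg fun k _ => pow_nonneg (cnt_nonneg A k) q

lemma cnt_insert {A : Finset ℕ} {p : ℕ} (hp : p ∉ A) (k : ℕ) :
    cnt (insert p A) k = cnt A k + if cell p ≤ k then cnt A (k - cell p) else 0 := by
  unfold cnt
  rw [Finset.sum_powerset_insert hp]
  congr 1
  split_ifs with h
  · refine Finset.sum_congr rfl fun B hB => ?_
    have : p ∉ B := fun h' => hp (Finset.mem_powerset.1 hB h')
    rw [Finset.sum_insert this]
    congr 1
    apply propext
    omega
  · refine Finset.sum_eq_zero fun B hB => ?_
    have : p ∉ B := fun h' => hp (Finset.mem_powerset.1 hB h')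
    rw [Finset.sum_insert this, if_neg]
    omega

lemma sum_cnt_le (N : ℕ) (A : Finset ℕ) : ∑ k ∈ Finset.range N, cnt A k ≤ 2 ^ A.card := by
  unfold cnt
  rw [Finset.sum_comm]
  calc _ ≤ ∑ B ∈ A.powerset, (1 : ℝ) := by
        refine Finset.sum_le_sum fun B _ => ?_
        rw [Finset.sum_ite_eq]
        split_ifs <;> norm_num
    _ = _ := by simp

/-- The majorant `a + a ^ q / Z ^ (q - 1)`, which controls all powers `a ^ j`, `1 ≤ j ≤ q`. -/
noncomputable def maj (q : ℕ) (Z a : ℝ) : ℝ := a + a ^ q / Z ^ (q - 1)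

lemma maj_nonneg {q : ℕ} {Z a : ℝ} (hZ : 0 < Z) (ha : 0 ≤ a) : 0 ≤ maj q Z a := by
  unfold maj; positivity

lemma pow_le_maj {q j : ℕ} {Z a : ℝ} (hZ : 0 < Z) (ha : 0 ≤ a) (hj : 1 ≤ j) (hjq : j ≤ q) :
    a ^ j ≤ Z ^ (j - 1) * maj q Z a := by
  unfold maj
  rcases le_total a Z with h | h
  · have h1 : a ^ j = a ^ (j - 1) * a := by rw [← pow_succ]; congr 1; omega
    rw [h1, mul_add]
    have : a ^ (j - 1) * a ≤ Z ^ (j - 1) * a := by gcongr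
    have : 0 ≤ Z ^ (j - 1) * (a ^ q / Z ^ (q - 1)) := by positivity
    linarith
  · have h1 : a ^ q = a ^ j * a ^ (q - j) := by rw [← pow_add]; congr 1; omega
    have h2 : Z ^ (q - 1) = Z ^ (j - 1) * Z ^ (q - j) := by rw [← pow_add]; congr 1; omega
    have h3 : Z ^ (j - 1) * (a ^ q / Z ^ (q - 1)) = a ^ j * (a ^ (q - j) / Z ^ (q - j)) := by
      rw [h1, h2]; field_simp
    have h4 : 1 ≤ a ^ (q - j) / Z ^ (q - j) := by
      rw [one_le_div (by positivity)]; gcongr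
    rw [mul_add, h3]
    have : 0 ≤ Z ^ (j - 1) * a := by positivity
    nlinarith [pow_nonneg ha j]

/-- Binomial expansion of `(a + b) ^ q`, with every mixed term `a ^ m b ^ (q - m)`, `0 < m < q`,
bounded by means of the majorants of `a` and `b`. -/
lemma add_pow_le_maj {q : ℕ} (hq : 2 ≤ q) {Z a b : ℝ} (hZ : 0 < Z) (ha : 0 ≤ a) (hb : 0 ≤ b) :
    (a + b) ^ q ≤ a ^ q + b ^ q + 2 ^ q * Z ^ (q - 2) * (maj q Z a * maj q Z b) := by
  set X := Z ^ (q - 2) * (maj q Z a * maj q Z b) with hX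
  have hX0 : 0 ≤ X := by
    have := maj_nonneg (q := q) hZ ha
    have := maj_nonneg (q := q) hZ hb
    positivity
  have key : ∀ m ∈ Finset.range (q + 1), a ^ m * b ^ (q - m) * (q.choose m : ℝ) ≤
      (if m = q then a ^ q else 0) + (if m = 0 then b ^ q else 0) + X * (q.choose m : ℝ) := by
    intro m hm
    have hm' : m ≤ q := by simpa [Nat.lt_succ_iff] using hm
    have hc : (0 : ℝ) ≤ (q.choose m : ℝ) := by positivity
    by_cases h0 : m = 0
    · subst h0
      have : q ≠ 0 := by omega
      simp [this.symm, hX0]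
    by_cases h1 : m = q
    · subst h1
      simp [h0, hX0]
    rw [if_neg h0, if_neg h1, zero_add, zero_add]
    refine mul_le_mul_of_nonneg_right ?_ hc
    have e1 := pow_le_maj (q := q) (j := m) hZ ha (by omega) hm'
    have e2 := pow_le_maj (q := q) (j := q - m) hZ hb (by omega) (by omega)
    calc a ^ m * b ^ (q - m) ≤ (Z ^ (m - 1) * maj q Z a) * (Z ^ (q - m - 1) * maj q Z b) := by
          gcongr
          have := maj_nonneg (q := q) hZ ha
          positivity
      _ = Z ^ ((m - 1) + (q - m - 1)) * (maj q Z a * maj q Z b) := by rw [pow_add]; ring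
      _ = X := by rw [hX]; congr 2; omega
  rw [add_pow]
  refine (Finset.sum_le_sum key).trans ?_
  rw [Finset.sum_add_distrib, Finset.sum_add_distrib, ← Finset.mul_sum, Finset.sum_ite_eq',
    Finset.sum_ite_eq']
  have : (∑ i ∈ Finset.range (q + 1), (q.choose i : ℝ)) = 2 ^ q := by
    exact_mod_cast Nat.sum_range_choose q
  rw [this]
  simp
  linarith

lemma sum_shift_le {N l : ℕ} {g : ℕ → ℝ} (hg : ∀ k, 0 ≤ g k) :
    ∑ k ∈ Finset.range N, (if l ≤ k then g (k - l) else 0) ≤ ∑ k ∈ Finset.range N, g k := by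
  rw [← Finset.sum_filter]
  have hinj : Set.InjOn (fun k => k - l) ((Finset.range N).filter (l ≤ ·)) := by
    intro a ha b hb hab
    simp only [Finset.coe_filter, Set.mem_ofPred_eq] at ha hb hab
    omega
  rw [← Finset.sum_image (g := fun k => k - l) (f := g) hinj]
  refine Finset.sum_le_sum_of_subset_of_nonneg ?_ fun i _ _ => hg i
  intro i hi
  obtain ⟨k, hk, rfl⟩ := Finset.mem_image.1 hi
  simp only [Finset.mem_filter, Finset.mem_range] at hk ⊢
  omega

/-- The correlation of the majorants of `cnt A` at distance `cell p`. -/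
noncomputable def corr (N q : ℕ) (Z : ℝ) (A : Finset ℕ) (p : ℕ) : ℝ :=
  ∑ k ∈ Finset.range N, maj q Z (cnt A k) * (if cell p ≤ k then maj q Z (cnt A (k - cell p)) else 0)

lemma corr_nonneg {N q : ℕ} {Z : ℝ} (hZ : 0 < Z) (A : Finset ℕ) (p : ℕ) :
    0 ≤ corr N q Z A p := by
  refine Finset.sum_nonneg fun k _ => mul_nonneg (maj_nonneg hZ (cnt_nonneg _ _)) ?_
  split_ifs
  · exact maj_nonneg hZ (cnt_nonneg _ _)
  · exact le_rfl

/-- Adjoining a prime replaces `cnt A` by its sum with a translate, so that the moment at most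
doubles up to a correlation term. -/
lemma mom_insert_le {N q : ℕ} (hq : 2 ≤ q) {Z : ℝ} (hZ : 0 < Z) {A : Finset ℕ} {p : ℕ}
    (hp : p ∉ A) :
    mom N q (insert p A) ≤ 2 * mom N q A + 2 ^ q * Z ^ (q - 2) * corr N q Z A p := by
  have key : ∀ k ∈ Finset.range N, cnt (insert p A) k ^ q ≤ cnt A k ^ q +
      (if cell p ≤ k then cnt A (k - cell p) ^ q else 0) + 2 ^ q * Z ^ (q - 2) *
      (maj q Z (cnt A k) * (if cell p ≤ k then maj q Z (cnt A (k - cell p)) else 0)) := by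
    intro k _
    rw [cnt_insert hp]
    split_ifs with h
    · exact add_pow_le_maj hq hZ (cnt_nonneg _ _) (cnt_nonneg _ _)
    · simp
  have h2 := sum_shift_le (N := N) (l := cell p) (g := fun k => cnt A k ^ q)
    (fun k => pow_nonneg (cnt_nonneg A k) q)
  have := Finset.sum_le_sum key
  rw [Finset.sum_add_distrib, Finset.sum_add_distrib, ← Finset.mul_sum] at this
  unfold corr
  unfold mom at *
  linarith

/-- On average over `p` the correlations decouple: if each value of `cell` carries weight at most `K`,
then summing over `p` turns the correlation into the square of the total mass of the majorant. -/
lemma sum_corr_le {N q : ℕ} {Z : ℝ} (hZ : 0 < Z) (A T : Finset ℕ) {w : ℕ → ℝ}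
    {K : ℝ} (hw : ∀ p ∈ T, 0 ≤ w p) (hK : ∀ j, ∑ p ∈ T with cell p = j, w p ≤ K) :
    ∑ p ∈ T, w p * corr N q Z A p ≤ K * (∑ k ∈ Finset.range N, maj q Z (cnt A k)) ^ 2 := by
  have hm : ∀ k, 0 ≤ maj q Z (cnt A k) := fun k => maj_nonneg hZ (cnt_nonneg _ _)
  have hK0 : 0 ≤ K := (Finset.sum_nonneg fun p hp => hw p (Finset.mem_filter.1 hp).1).trans (hK 0)
  set Φ := ∑ k ∈ Finset.range N, maj q Z (cnt A k)
  have inner : ∀ k ∈ Finset.range N, ∑ p ∈ T, w p *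
      (if cell p ≤ k then maj q Z (cnt A (k - cell p)) else 0) ≤ K * Φ := by
    intro k hk
    have e1 : ∑ p ∈ T, w p * (if cell p ≤ k then maj q Z (cnt A (k - cell p)) else 0) =
        ∑ p ∈ T with cell p ≤ k, w p * maj q Z (cnt A (k - cell p)) := by
      rw [Finset.sum_filter]
      exact Finset.sum_congr rfl fun p _ => by split_ifs <;> simp
    have e2 := Finset.sum_fiberwise_of_maps_to (s := T.filter (cell · ≤ k))
      (t := Finset.range (k + 1)) (g := cell) (fun p hp => by
        have := (Finset.mem_filter.1 hp).2
        simpa [Nat.lt_succ_iff] using this) (fun p => w p * maj q Z (cnt A (k - cell p)))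
    rw [e1, ← e2]
    calc _ ≤ ∑ j ∈ Finset.range (k + 1), K * maj q Z (cnt A (k - j)) := by
          refine Finset.sum_le_sum fun j hj => ?_
          have hj' : j ≤ k := by simpa [Nat.lt_succ_iff] using hj
          have : ∑ p ∈ (T.filter (cell · ≤ k)) with cell p = j,
              w p * maj q Z (cnt A (k - cell p)) =
              (∑ p ∈ T with cell p = j, w p) * maj q Z (cnt A (k - j)) := by
            rw [Finset.sum_mul, Finset.filter_filter]
            refine Finset.sum_congr ?_ ?_
            · ext p; simp only [Finset.mem_filter]; constructor
              · rintro ⟨a, b, c⟩; exact ⟨a, c⟩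
              · rintro ⟨a, c⟩; exact ⟨a, c ▸ hj', c⟩
            · intro p hp
              rw [(Finset.mem_filter.1 hp).2]
          rw [this]
          exact mul_le_mul_of_nonneg_right (hK j) (hm _)
      _ = K * ∑ j ∈ Finset.range (k + 1), maj q Z (cnt A j) := by
          rw [← Finset.mul_sum, ← Finset.sum_range_reflect (fun j => maj q Z (cnt A j))]
          simp
      _ ≤ K * Φ := by
          refine mul_le_mul_of_nonneg_left ?_ hK0
          refine Finset.sum_le_sum_of_subset_of_nonneg ?_ fun i _ _ => hm i
          intro i hi
          simp only [Finset.mem_range] at *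
          omega
  unfold corr
  simp_rw [Finset.mul_sum]
  rw [Finset.sum_comm]
  calc _ = ∑ k ∈ Finset.range N, maj q Z (cnt A k) * ∑ p ∈ T, w p *
      (if cell p ≤ k then maj q Z (cnt A (k - cell p)) else 0) := by
        refine Finset.sum_congr rfl fun k _ => ?_
        rw [Finset.mul_sum]
        exact Finset.sum_congr rfl fun p _ => by ring
    _ ≤ ∑ k ∈ Finset.range N, maj q Z (cnt A k) * (K * Φ) :=
        Finset.sum_le_sum fun k hk => mul_le_mul_of_nonneg_left (inner k hk) (hm k)
    _ = K * Φ ^ 2 := by rw [← Finset.sum_mul]; ring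

/-- The `ℓ^q` norm of the counting function `cnt A`. -/
noncomputable def nrm (N q : ℕ) (A : Finset ℕ) : ℝ := mom N q A ^ ((q : ℝ)⁻¹)

lemma nrm_nonneg (N q : ℕ) (A : Finset ℕ) : 0 ≤ nrm N q A := Real.rpow_nonneg (mom_nonneg _ _ _) _

lemma nrm_pow {N q : ℕ} (hq : 1 ≤ q) (A : Finset ℕ) : nrm N q A ^ q = mom N q A :=
  Real.rpow_inv_natCast_pow (mom_nonneg _ _ _) (by omega)

lemma cnt_le_nrm {N q : ℕ} (hq : 1 ≤ q) {A : Finset ℕ} {k : ℕ} (hk : k < N) :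
    cnt A k ≤ nrm N q A := by
  refine le_of_pow_le_pow_left₀ (n := q) (by omega) (nrm_nonneg _ _ _) ?_
  rw [nrm_pow hq]
  exact Finset.single_le_sum (f := fun k => cnt A k ^ q)
    (fun k _ => pow_nonneg (cnt_nonneg A k) q) (Finset.mem_range.2 hk)

lemma nrm_le {N q : ℕ} (hq : 1 ≤ q) (A : Finset ℕ) : nrm N q A ≤ 2 ^ A.card := by
  refine le_of_pow_le_pow_left₀ (n := q) (by omega) (by positivity) ?_
  rw [nrm_pow hq]
  calc mom N q A ≤ ∑ k ∈ Finset.range N, cnt A k * (2 ^ A.card) ^ (q - 1) := by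
        refine Finset.sum_le_sum fun k hk => ?_
        have h1 : cnt A k ^ q = cnt A k * cnt A k ^ (q - 1) := by
          rw [← pow_succ']; congr 1; omega
        rw [h1]
        have h2 : cnt A k ≤ 2 ^ A.card := (Finset.single_le_sum (f := fun k => cnt A k)
          (fun k _ => cnt_nonneg A k) hk).trans (sum_cnt_le N A)
        have := cnt_nonneg A k
        gcongr
    _ ≤ 2 ^ A.card * (2 ^ A.card) ^ (q - 1) := by
        rw [← Finset.sum_mul]
        gcongr
        exact sum_cnt_le N A
    _ = (2 ^ A.card) ^ q := by rw [← pow_succ']; congr 1; omega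

/-- The factor `2` of `mom_insert_le` costs only `1 + 1 / q` after taking `q`-th roots. -/
lemma two_le_pow {q : ℕ} (hq : 1 ≤ q) : (2 : ℝ) ≤ (1 + 1 / q) ^ q := by
  have h := one_add_mul_le_pow (a := (1 / q : ℝ)) (by
    have : (0 : ℝ) ≤ 1 / q := by positivity
    linarith) q
  have : (q : ℝ) * (1 / q) = 1 := by
    have : (q : ℝ) ≠ 0 := by positivity
    field_simp
  linarith

/-- Linearised bound for the norm after adjoining one prime; `Y` is a free parameter. -/
lemma nrm_insert_le {N q : ℕ} (hq : 2 ≤ q) {Z Y : ℝ} (hZ : 0 < Z) (hY : 0 < Y) {A : Finset ℕ}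
    {p : ℕ} (hp : p ∉ A) :
    nrm N q (insert p A) ≤ (1 + 1 / q) * nrm N q A + Y +
      2 ^ q * Z ^ (q - 2) * corr N q Z A p / Y ^ (q - 1) := by
  have hf := nrm_nonneg N q A
  have hc := corr_nonneg (N := N) (q := q) hZ A p
  set D := 2 ^ q * Z ^ (q - 2) * corr N q Z A p with hD
  have hD0 : 0 ≤ D := by positivity
  refine le_of_pow_le_pow_left₀ (n := q) (by omega) (by positivity) ?_
  rw [nrm_pow (by omega), add_assoc]
  have h1 := mom_insert_le (N := N) hq hZ hp
  have h2 : 2 * mom N q A ≤ ((1 + 1 / q) * nrm N q A) ^ q := by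
    rw [mul_pow, nrm_pow (by omega)]
    exact mul_le_mul_of_nonneg_right (two_le_pow (by omega)) (mom_nonneg _ _ _)
  have h3 : D ≤ (Y + D / Y ^ (q - 1)) ^ q := by
    calc D = D / Y ^ (q - 1) * Y ^ (q - 1) := by field_simp
      _ ≤ (Y + D / Y ^ (q - 1)) * (Y + D / Y ^ (q - 1)) ^ (q - 1) := by
          have : 0 ≤ D / Y ^ (q - 1) := by positivity
          gcongr <;> linarith
      _ = _ := by rw [← pow_succ']; congr 1; omega
  calc _ ≤ 2 * mom N q A + D := h1
    _ ≤ ((1 + 1 / q) * nrm N q A) ^ q + (Y + D / Y ^ (q - 1)) ^ q := add_le_add h2 h3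
    _ ≤ _ := pow_add_pow_le (by positivity) (by positivity) (by omega)

/-- The constants of the correlation term: with exponent `q = m + 2`, `Z = g z` and `Y = g / Q`, the
choice of `z` turns the averaged correlation into a quantity linear in `g`. -/
lemma corr_const_le (m : ℕ) {g z K Q θ : ℝ} (hg0 : 0 < g) (hz : 0 < z) (hθ : 0 < θ) (hK0 : 0 ≤ K)
    (hQ : 0 < Q) (hzq : z ^ (m + 2) = (8 * Q) ^ (m + 2) * θ) :
    2 ^ (m + 2) * (g * z) ^ m / (g / Q) ^ (m + 1) * (K * (2 * g / z ^ (m + 1)) ^ 2) ≤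
      K * g / (Q * θ) := by
  have e : 2 ^ (m + 2) * (g * z) ^ m / (g / Q) ^ (m + 1) * (K * (2 * g / z ^ (m + 1)) ^ 2) =
      4 * 2 ^ (m + 2) * Q ^ (m + 1) * K * g / z ^ (m + 2) := by
    rw [mul_pow, div_pow, div_pow]
    field_simp
    ring
  rw [e, hzq]
  have : 4 * 2 ^ (m + 2) * Q ^ (m + 1) * K * g / ((8 * Q) ^ (m + 2) * θ) =
      (4 * (2 / 8) ^ (m + 2)) * (K * g / (Q * θ)) := by
    rw [mul_pow, div_pow]
    field_simp
    ring
  rw [this]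
  have h4 : 4 * ((2 : ℝ) / 8) ^ (m + 2) ≤ 1 := by
    have : ((2 : ℝ) / 8) ^ m ≤ 1 := pow_le_one₀ (by norm_num) (by norm_num)
    rw [pow_add]
    linarith
  have h5 : 0 ≤ K * g / (Q * θ) := by positivity
  nlinarith

/-- Average of the norm after adjoining a prime `p` from `T`: it is at most `P` times the old norm
plus an error that carries a factor `1 / q`. The term with `2 ^ #A` comes from the total mass of
`cnt A`. -/
lemma sum_nrm_insert_le {N q : ℕ} (hq : 2 ≤ q) {A T : Finset ℕ} (hT : ∀ p ∈ T, p ∉ A) {w : ℕ → ℝ}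
    {K P θ z : ℝ} (hθ : 0 < θ) (hw : ∀ p ∈ T, 0 ≤ w p)
    (hK : ∀ j, ∑ p ∈ T with cell p = j, w p ≤ K) (hP : ∑ p ∈ T, w p ≤ P) (hPK : P ≤ K / θ)
    (hz : 0 < z) (hzq : z ^ q = (8 * q) ^ q * θ) :
    ∑ p ∈ T, w p * nrm N q (insert p A) ≤
      P * nrm N q A + 3 * K / (q * θ) * (nrm N q A + z ^ (q - 1) * 2 ^ A.card) := by
  have hf := nrm_nonneg N q A
  set f := nrm N q A with hfdef
  set g := f + z ^ (q - 1) * 2 ^ A.card with hg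
  have hg0 : 0 < g := by positivity
  have hq0 : (0 : ℝ) < q := by positivity
  have hK0 : 0 ≤ K := (Finset.sum_nonneg fun p hp => hw p (Finset.mem_filter.1 hp).1).trans (hK 0)
  have hP0 : 0 ≤ P := (Finset.sum_nonneg hw).trans hP
  -- With these parameters each error term below is a multiple of `K * g / (q * θ)`.
  set Z := g * z with hZ
  set Y := g / q with hY
  have hZ0 : 0 < Z := by positivity
  have hY0 : 0 < Y := by positivity
  set Φ := ∑ k ∈ Finset.range N, maj q Z (cnt A k) with hΦ
  have hΦ0 : 0 ≤ Φ := Finset.sum_nonneg fun k _ => maj_nonneg hZ0 (cnt_nonneg _ _)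
  have hΦle : Φ ≤ 2 * g / z ^ (q - 1) := by
    have e : Φ = ∑ k ∈ Finset.range N, cnt A k + mom N q A / Z ^ (q - 1) := by
      simp only [hΦ, maj, mom]
      rw [Finset.sum_add_distrib, Finset.sum_div]
    have h1 : ∑ k ∈ Finset.range N, cnt A k ≤ g / z ^ (q - 1) := by
      refine (sum_cnt_le N A).trans ?_
      rw [le_div_iff₀ (by positivity)]
      nlinarith
    have h2 : mom N q A / Z ^ (q - 1) ≤ g / z ^ (q - 1) := by
      rw [← nrm_pow (by omega : 1 ≤ q), ← hfdef, hZ, mul_pow, div_le_div_iff₀ (by positivity)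
        (by positivity)]
      have : f ^ q ≤ g * g ^ (q - 1) := by
        rw [← pow_succ', Nat.sub_add_cancel (by omega : 1 ≤ q)]
        gcongr
        have : 0 ≤ z ^ (q - 1) * 2 ^ A.card := by positivity
        linarith
      calc f ^ q * z ^ (q - 1) ≤ g * g ^ (q - 1) * z ^ (q - 1) := by gcongr
        _ = _ := by ring
    rw [e]
    calc _ ≤ g / z ^ (q - 1) + g / z ^ (q - 1) := add_le_add h1 h2
      _ = _ := by ring
  have hcorr : ∑ p ∈ T, w p * corr N q Z A p ≤ K * (2 * g / z ^ (q - 1)) ^ 2 := by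
    refine (sum_corr_le hZ0 A T hw hK).trans ?_
    gcongr
  have hmain : 2 ^ q * Z ^ (q - 2) / Y ^ (q - 1) * (K * (2 * g / z ^ (q - 1)) ^ 2) ≤
      K * g / (q * θ) := by
    obtain ⟨m, hm⟩ : ∃ m, q = m + 2 := ⟨q - 2, by omega⟩
    have h2 : q - 2 = m := by omega
    have h1 : q - 1 = m + 1 := by omega
    rw [hZ, hY, h1, h2]
    have h3 := hzq
    nth_rw 1 [hm] at h3 ⊢
    nth_rw 2 [hm] at h3
    exact corr_const_le m hg0 hz hθ hK0 hq0 h3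
  have hfg : f ≤ g := by
    have : 0 ≤ z ^ (q - 1) * 2 ^ A.card := by positivity
    linarith
  have hbound : ∑ p ∈ T, w p * nrm N q (insert p A) ≤ ∑ p ∈ T, (w p * ((1 + 1 / q) * f + Y) +
      2 ^ q * Z ^ (q - 2) / Y ^ (q - 1) * (w p * corr N q Z A p)) := by
    refine Finset.sum_le_sum fun p hp => ?_
    have := mul_le_mul_of_nonneg_left (nrm_insert_le (N := N) hq hZ0 hY0 (hT p hp)) (hw p hp)
    refine this.trans (le_of_eq ?_)
    ring
  refine hbound.trans ?_
  rw [Finset.sum_add_distrib, ← Finset.sum_mul, ← Finset.mul_sum]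
  have hA1 : (∑ p ∈ T, w p) * ((1 + 1 / q) * f + Y) ≤ P * f + 2 * (K / θ * (g / q)) := by
    calc (∑ p ∈ T, w p) * ((1 + 1 / q) * f + Y) ≤ P * ((1 + 1 / q) * f + Y) := by gcongr
      _ = P * f + P * (f / q) + P * (g / q) := by rw [hY]; ring
      _ ≤ P * f + K / θ * (g / q) + K / θ * (g / q) := by gcongr
      _ = _ := by ring
  have hA2 : 2 ^ q * Z ^ (q - 2) / Y ^ (q - 1) * ∑ p ∈ T, w p * corr N q Z A p ≤
      K * g / (q * θ) := by
    refine le_trans ?_ hmain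
    gcongr
  calc _ ≤ P * f + 2 * (K / θ * (g / q)) + K * g / (q * θ) := add_le_add hA1 hA2
    _ = _ := by field_simp; ring

/-! ### The differential inequality for the Dirichlet polynomial -/

/-- The weight `∑ (log p) p ^ (-1 - θ)` of the primes in one cell, bounded through Chebyshev. -/
lemma sum_log_cell_le {Ps : Finset ℕ} (hPs : ∀ p ∈ Ps, p.Prime) {θ : ℝ} (hθ : 0 ≤ θ) (j : ℕ) :
    ∑ p ∈ Ps with cell p = j, Real.log p * (p : ℝ) ^ (-(1 + θ)) ≤
      Real.log 4 * Real.exp 1 * Real.exp (-θ) ^ j := by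
  have hcell : ∀ p ∈ Ps.filter (cell · = j), Real.exp j ≤ p ∧ (p : ℝ) ≤ Real.exp (j + 1) := by
    intro p hp
    obtain ⟨hp, hj⟩ := Finset.mem_filter.1 hp
    have hp0 : (0 : ℝ) < p := by exact_mod_cast (hPs p hp).pos
    have hl : 0 ≤ Real.log p := Real.log_natCast_nonneg p
    have h1 := Nat.floor_le hl
    have h2 := Nat.lt_floor_add_one (Real.log p)
    unfold cell at hj
    rw [hj] at h1 h2
    exact ⟨(Real.le_log_iff_exp_le hp0).1 h1, ((Real.log_lt_iff_lt_exp hp0).1 h2).le⟩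
  have htheta : ∑ p ∈ Ps with cell p = j, Real.log p ≤ Real.log 4 * Real.exp (j + 1) := by
    refine le_trans ?_ (Chebyshev.theta_le_log4_mul_x (Real.exp_pos (j + 1)).le)
    unfold Chebyshev.theta
    refine Finset.sum_le_sum_of_subset_of_nonneg ?_ fun p _ _ => Real.log_natCast_nonneg p
    intro p hp
    have hp' := hPs p (Finset.mem_filter.1 hp).1
    simp only [Finset.mem_filter, Finset.mem_Ioc]
    exact ⟨⟨hp'.pos, Nat.le_floor (hcell p hp).2⟩, hp'⟩
  calc _ ≤ ∑ p ∈ Ps with cell p = j, Real.log p * Real.exp j ^ (-(1 + θ)) := by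
        refine Finset.sum_le_sum fun p hp => ?_
        refine mul_le_mul_of_nonneg_left ?_ (Real.log_natCast_nonneg p)
        exact Real.rpow_le_rpow_of_nonpos (Real.exp_pos _) (hcell p hp).1 (by linarith)
    _ = (∑ p ∈ Ps with cell p = j, Real.log p) * Real.exp j ^ (-(1 + θ)) := by
        rw [Finset.sum_mul]
    _ ≤ Real.log 4 * Real.exp (j + 1) * Real.exp j ^ (-(1 + θ)) := by gcongr
    _ = _ := by
        rw [← Real.exp_mul, ← Real.exp_nat_mul, mul_assoc, mul_assoc, ← Real.exp_add,
          ← Real.exp_add]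
        congr 2
        ring

lemma sum_log_le {Ps : Finset ℕ} (hPs : ∀ p ∈ Ps, p.Prime) {θ : ℝ} (hθ : 0 < θ) (hθ1 : θ ≤ 1) :
    ∑ p ∈ Ps, Real.log p * (p : ℝ) ^ (-(1 + θ)) ≤ 2 * (Real.log 4 * Real.exp 1) / θ := by
  have hx1 : Real.exp (-θ) < 1 := by rw [Real.exp_lt_one_iff]; linarith
  have hx2 : Real.exp (-θ) ≤ 1 - θ / 2 := by
    rw [Real.exp_neg]
    have h1 : (Real.exp θ)⁻¹ ≤ (θ + 1)⁻¹ := by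
      gcongr
      exact Real.add_one_le_exp θ
    have h2 : (θ + 1)⁻¹ ≤ 1 - θ / 2 := by
      rw [inv_le_iff_one_le_mul₀ (by linarith)]
      nlinarith
    linarith
  have hK : 0 ≤ Real.log 4 * Real.exp 1 := by positivity
  have e := Finset.sum_fiberwise_of_maps_to (s := Ps) (t := Ps.image cell) (g := cell)
    (fun p hp => Finset.mem_image_of_mem _ hp) (fun p => Real.log p * (p : ℝ) ^ (-(1 + θ)))
  rw [← e]
  calc _ ≤ ∑ j ∈ Ps.image cell, Real.log 4 * Real.exp 1 * Real.exp (-θ) ^ j :=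
        Finset.sum_le_sum fun j _ => sum_log_cell_le hPs hθ.le j
    _ = Real.log 4 * Real.exp 1 * ∑ j ∈ Ps.image cell, Real.exp (-θ) ^ j := by
        rw [Finset.mul_sum]
    _ ≤ Real.log 4 * Real.exp 1 * (1 - Real.exp (-θ))⁻¹ := by
        refine mul_le_mul_of_nonneg_left ?_ hK
        rw [← tsum_geometric_of_lt_one (Real.exp_pos _).le hx1]
        exact (summable_geometric_of_lt_one (Real.exp_pos _).le hx1).sum_le_tsum _
          fun i _ => by positivity
    _ ≤ Real.log 4 * Real.exp 1 * (θ / 2)⁻¹ := by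
        gcongr
        linarith
    _ = _ := by field_simp

/-- The Euler product bound `exp (∑ p ^ (-σ)) ≤ ζ(σ) ≤ 2 / (σ - 1)`. -/
lemma exp_sum_prime_le {Ps : Finset ℕ} (hPs : ∀ p ∈ Ps, p.Prime) {θ : ℝ} (hθ : 0 < θ)
    (hθ1 : θ ≤ 1) : Real.exp (∑ p ∈ Ps, (p : ℝ) ^ (-(1 + θ))) ≤ 2 / θ := by
  let F : ℕ →* ℝ :=
    { toFun := fun n => (n : ℝ) ^ (-(1 + θ))
      map_one' := by simp
      map_mul' := fun m n => by
        push_cast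
        exact Real.mul_rpow (Nat.cast_nonneg _) (Nat.cast_nonneg _) }
  have hF : ∀ n, F n = (n : ℝ) ^ (-(1 + θ)) := fun _ => rfl
  have hsum : Summable F := by
    have : Summable fun n : ℕ => (n : ℝ) ^ (-(1 + θ)) :=
      Real.summable_nat_rpow.2 (by linarith)
    exact this
  have hF0 : ∀ n, 0 ≤ F n := fun n => Real.rpow_nonneg (Nat.cast_nonneg _) _
  have h1 := EulerProduct.prod_filter_prime_geometric_eq_tsum_factoredNumbers hsum Ps
  have hfil : Ps.filter (fun p => p.Prime) = Ps := Finset.filter_true_of_mem hPs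
  have h2 : ∑' m : Nat.factoredNumbers Ps, F m ≤ ∑' n, F n :=
    hsum.tsum_subtype_le F _ hF0
  have h3 : ∑' n, F n = ∑' n : ℕ, 1 / ((n : ℝ) + 1) ^ (1 + θ) := by
    rw [hsum.tsum_eq_zero_add]
    have : F 0 = 0 := by
      rw [hF]
      simp only [Nat.cast_zero]
      exact Real.zero_rpow (by linarith)
    rw [this, zero_add]
    refine tsum_congr fun n => ?_
    rw [hF, Real.rpow_neg (Nat.cast_nonneg _), one_div]
    push_cast
    rfl
  have h4 := ZetaAsymptotics.zeta_limit_aux1 (s := 1 + θ) (by linarith)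
  have h5 : 0 ≤ ZetaAsymptotics.termTSum (1 + θ) := tsum_nonneg fun n =>
    ZetaAsymptotics.term_nonneg _ _
  have h6 : ∑' n, F n ≤ 2 / θ := by
    rw [h3]
    have h7 : 1 + θ - 1 = θ := by ring
    rw [h7] at h4
    have : 0 ≤ (1 + θ) * ZetaAsymptotics.termTSum (1 + θ) := by positivity
    have h8 : 1 ≤ 1 / θ := by rw [le_div_iff₀ hθ]; linarith
    have : 2 / θ = 1 / θ + 1 / θ := by ring
    linarith
  refine le_trans ?_ (h2.trans h6)
  rw [← h1, Real.exp_sum]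
  have : ∏ p ∈ Ps with Nat.Prime p, (1 - F p)⁻¹ = ∏ p ∈ Ps, (1 - F p)⁻¹ := by
    refine Finset.prod_congr ?_ fun _ _ => rfl
    ext p; simp only [Finset.mem_filter]; exact ⟨fun h => h.1, fun h => ⟨h, hPs p h⟩⟩
  rw [this]
  refine Finset.prod_le_prod (fun _ _ => (Real.exp_pos _).le) fun p hp => ?_
  have hp1 : F p < 1 := by
    rw [hF]
    exact Real.rpow_lt_one_of_one_lt_of_neg (by exact_mod_cast (hPs p hp).one_lt) (by linarith)
  rw [← hF, le_inv_comm₀ (Real.exp_pos _) (by linarith), ← Real.exp_neg]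
  have := Real.add_one_le_exp (-F p)
  linarith

/-- The weight `∏ p ∈ A, p ^ (-σ)`. -/
noncomputable def wt (σ : ℝ) (A : Finset ℕ) : ℝ := ∏ p ∈ A, (p : ℝ) ^ (-σ)

lemma wt_nonneg (σ : ℝ) (A : Finset ℕ) : 0 ≤ wt σ A :=
  Finset.prod_nonneg fun _ _ => Real.rpow_nonneg (Nat.cast_nonneg _) _

lemma hasDerivAt_rpow_neg {p : ℕ} (hp : p.Prime) (σ : ℝ) :
    HasDerivAt (fun s : ℝ => (p : ℝ) ^ (-s)) (-(Real.log p * (p : ℝ) ^ (-σ))) σ := by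
  have hp0 : (0 : ℝ) < p := by exact_mod_cast hp.pos
  have := (hasDerivAt_neg σ).const_rpow (a := (p : ℝ)) hp0
  convert this using 1
  ring

lemma hasDerivAt_wt {A : Finset ℕ} (hA : ∀ p ∈ A, p.Prime) (σ : ℝ) :
    HasDerivAt (fun s => wt s A) (-((∑ p ∈ A, Real.log p) * wt σ A)) σ := by
  have e : ∀ s : ℝ, wt s A = Real.exp (-s * ∑ p ∈ A, Real.log p) := by
    intro s
    unfold wt
    rw [Finset.mul_sum, Real.exp_sum]
    refine Finset.prod_congr rfl fun p hp => ?_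
    rw [Real.rpow_def_of_pos (by exact_mod_cast (hA p hp).pos)]
    ring_nf
  have h : HasDerivAt (fun s : ℝ => Real.exp (-s * ∑ p ∈ A, Real.log p))
      (Real.exp (-σ * ∑ p ∈ A, Real.log p) * (-1 * ∑ p ∈ A, Real.log p)) σ :=
    ((hasDerivAt_neg σ).mul_const _).exp
  rw [e σ]
  have : (fun s => wt s A) = fun s : ℝ => Real.exp (-s * ∑ p ∈ A, Real.log p) := funext e
  rw [this]
  convert h using 1
  ring

/-- Reindexing pairs `p ∈ A` by `B = A \ {p}` and `p ∉ B`. -/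
lemma sum_powerset_mem (Ps : Finset ℕ) (G : Finset ℕ → ℕ → ℝ) :
    ∑ A ∈ Ps.powerset, ∑ p ∈ A, G A p =
      ∑ B ∈ Ps.powerset, ∑ p ∈ Ps \ B, G (insert p B) p := by
  rw [Finset.sum_sigma', Finset.sum_sigma']
  refine Finset.sum_bij' (fun x _ => ⟨x.1.erase x.2, x.2⟩) (fun x _ => ⟨insert x.2 x.1, x.2⟩)
    ?_ ?_ ?_ ?_ ?_
  · rintro ⟨A, p⟩ h
    simp only [Finset.mem_sigma, Finset.mem_powerset, Finset.mem_sdiff] at h ⊢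
    exact ⟨(Finset.erase_subset _ _).trans h.1, h.1 h.2, Finset.notMem_erase _ _⟩
  · rintro ⟨A, p⟩ h
    simp only [Finset.mem_sigma, Finset.mem_powerset, Finset.mem_sdiff] at h ⊢
    exact ⟨Finset.insert_subset h.2.1 h.1, Finset.mem_insert_self _ _⟩
  · rintro ⟨A, p⟩ h
    simp only [Finset.mem_sigma] at h
    simp [Finset.insert_erase h.2]
  · rintro ⟨A, p⟩ h
    simp only [Finset.mem_sigma, Finset.mem_sdiff] at h
    simp [Finset.erase_insert h.2.2]
  · rintro ⟨A, p⟩ h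
    simp only [Finset.mem_sigma] at h
    simp [Finset.insert_erase h.2]

/-- The `ℓ^q` norm of `cnt A`, twisted by `(1 + 1 / q) ^ #A`. The twist absorbs, up to a factor
`q`, the `#A + 1` cells that a window can meet. -/
noncomputable def tnrm (N q : ℕ) (A : Finset ℕ) : ℝ := (1 + 1 / q) ^ A.card * nrm N q A

lemma tnrm_nonneg (N q : ℕ) (A : Finset ℕ) : 0 ≤ tnrm N q A :=
  mul_nonneg (by positivity) (nrm_nonneg _ _ _)

/-- The Dirichlet polynomial `∑ tnrm(A) ∏ p ^ (-σ)`, the sum being over subsets `A` of the finite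
set of primes `Ps` and the product over `p ∈ A`. -/
noncomputable def dser (Ps : Finset ℕ) (N q : ℕ) (σ : ℝ) : ℝ :=
  ∑ A ∈ Ps.powerset, wt σ A * tnrm N q A

lemma dser_nonneg (Ps : Finset ℕ) (N q : ℕ) (σ : ℝ) : 0 ≤ dser Ps N q σ :=
  Finset.sum_nonneg fun _ _ => mul_nonneg (wt_nonneg _ _) (tnrm_nonneg _ _ _)

/-- The derivative of `dser`, rewritten so that each term adjoins one prime `p` to a set `B`. -/
lemma hasDerivAt_dser {Ps : Finset ℕ} (hPs : ∀ p ∈ Ps, p.Prime) (N q : ℕ) (σ : ℝ) :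
    HasDerivAt (dser Ps N q) (-∑ B ∈ Ps.powerset, wt σ B * ((1 + 1 / q) ^ (B.card + 1) *
      ∑ p ∈ Ps \ B, Real.log p * (p : ℝ) ^ (-σ) * nrm N q (insert p B))) σ := by
  have h : HasDerivAt (fun s => ∑ A ∈ Ps.powerset, wt s A * tnrm N q A)
      (∑ A ∈ Ps.powerset, -((∑ p ∈ A, Real.log p) * wt σ A) * tnrm N q A) σ := by
    refine HasDerivAt.fun_sum fun A hA => ?_
    exact (hasDerivAt_wt (fun p hp => hPs p (Finset.mem_powerset.1 hA hp)) σ).mul_const _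
  refine HasDerivAt.congr_deriv (f := dser Ps N q) h ?_
  have e : ∀ A ∈ Ps.powerset, -((∑ p ∈ A, Real.log p) * wt σ A) * tnrm N q A =
      ∑ p ∈ A, -(Real.log p * wt σ A * tnrm N q A) := by
    intro A _
    rw [Finset.sum_neg_distrib, ← Finset.sum_mul, ← Finset.sum_mul]
    ring
  rw [Finset.sum_congr rfl e, sum_powerset_mem, ← Finset.sum_neg_distrib]
  refine Finset.sum_congr rfl fun B _ => ?_
  rw [Finset.mul_sum, Finset.mul_sum, ← Finset.sum_neg_distrib]
  refine Finset.sum_congr rfl fun p hp => ?_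
  have hpB := (Finset.mem_sdiff.1 hp).2
  unfold wt tnrm
  rw [Finset.prod_insert hpB, Finset.card_insert_of_notMem hpB]
  ring

lemma sum_wt_pow_le (Ps : Finset ℕ) (σ : ℝ) {a : ℝ} (ha : 0 ≤ a) :
    ∑ A ∈ Ps.powerset, wt σ A * a ^ A.card ≤
      Real.exp (a * ∑ p ∈ Ps, (p : ℝ) ^ (-σ)) := by
  have h0 : ∀ p : ℕ, 0 ≤ (p : ℝ) ^ (-σ) := fun p => Real.rpow_nonneg (Nat.cast_nonneg _) _
  have e : ∑ A ∈ Ps.powerset, wt σ A * a ^ A.card = ∏ p ∈ Ps, (1 + a * (p : ℝ) ^ (-σ)) := by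
    rw [Finset.prod_one_add]
    refine Finset.sum_congr rfl fun A _ => ?_
    rw [Finset.prod_mul_distrib, Finset.prod_const, mul_comm]
    rfl
  rw [e, Finset.mul_sum, Real.exp_sum]
  refine Finset.prod_le_prod (fun p _ => ?_) fun p _ => ?_
  · have := h0 p
    positivity
  · have := Real.add_one_le_exp (a * (p : ℝ) ^ (-σ))
    linarith

/-- The absolute constant in the differential inequality. -/
noncomputable def cK : ℝ := 2 * (Real.log 4 * Real.exp 1)

lemma cK_pos : 0 < cK := by
  have : 0 < Real.log 4 := Real.log_pos (by norm_num)
  unfold cK; positivity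

/-- The constants of the inhomogeneous term: `z ^ (q - 1)` with `z = 8 q θ ^ (1 / q)` against the
Euler product of the weights `2 (1 + 1 / q) p ^ (-σ)`. -/
lemma twist_const_le {q : ℕ} (hq : 2 ≤ q) {δ θ h : ℝ} (hδ : 0 < δ) (hδθ : δ ≤ θ)
    (hh : Real.exp h ≤ 2 / θ) :
    (8 * q * θ ^ ((q : ℝ)⁻¹)) ^ (q - 1) * Real.exp (2 * (1 + 1 / q) * h) ≤
      (8 * q) ^ q * δ ^ (-(3 / (q : ℝ))) * Real.exp h := by
  have hθ : 0 < θ := by linarith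
  have hq0 : (0 : ℝ) < q := by positivity
  have hq2 : (2 : ℝ) ≤ q := by exact_mod_cast hq
  have e1 : Real.exp (2 * (1 + 1 / q) * h) = Real.exp h ^ (1 + 2 / (q : ℝ)) * Real.exp h := by
    rw [← Real.exp_mul, ← Real.exp_add]
    congr 1; ring
  have hexp : 0 ≤ 1 + 2 / (q : ℝ) := by positivity
  have e2 : Real.exp h ^ (1 + 2 / (q : ℝ)) ≤ 4 * θ ^ (-(1 + 2 / (q : ℝ))) := by
    calc Real.exp h ^ (1 + 2 / (q : ℝ)) ≤ (2 / θ) ^ (1 + 2 / (q : ℝ)) := by gcongr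
      _ = 2 ^ (1 + 2 / (q : ℝ)) * θ ^ (-(1 + 2 / (q : ℝ))) := by
          rw [Real.div_rpow (by norm_num) hθ.le, Real.rpow_neg hθ.le]; rfl
      _ ≤ 2 ^ (2 : ℝ) * θ ^ (-(1 + 2 / (q : ℝ))) := by
          gcongr
          · norm_num
          · have : 2 / (q : ℝ) ≤ 1 := by rw [div_le_one hq0]; exact hq2
            linarith
      _ = _ := by norm_num
  have e3 : (8 * q * θ ^ ((q : ℝ)⁻¹)) ^ (q - 1) = (8 * q) ^ (q - 1) * θ ^ (1 - 1 / (q : ℝ)) := by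
    rw [mul_pow, ← Real.rpow_mul_natCast hθ.le]
    congr 2
    rw [Nat.cast_sub (by omega)]
    field_simp
    simp
  have e4 : θ ^ (1 - 1 / (q : ℝ)) * θ ^ (-(1 + 2 / (q : ℝ))) = θ ^ (-(3 / (q : ℝ))) := by
    rw [← Real.rpow_add hθ]
    congr 1; ring
  have e5 : θ ^ (-(3 / (q : ℝ))) ≤ δ ^ (-(3 / (q : ℝ))) :=
    Real.rpow_le_rpow_of_nonpos hδ hδθ (by
      have : 0 ≤ 3 / (q : ℝ) := by positivity
      linarith)
  have e6 : (8 * (q : ℝ)) ^ q = (8 * q) ^ (q - 1) * (8 * q) := by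
    rw [← pow_succ]; congr 1; omega
  rw [e1, e3, ← mul_assoc]
  refine mul_le_mul_of_nonneg_right ?_ (Real.exp_pos _).le
  calc _ ≤ (8 * q) ^ (q - 1) * θ ^ (1 - 1 / (q : ℝ)) * (4 * θ ^ (-(1 + 2 / (q : ℝ)))) := by
        gcongr
    _ = (8 * q) ^ (q - 1) * 4 * (θ ^ (1 - 1 / (q : ℝ)) * θ ^ (-(1 + 2 / (q : ℝ)))) := by ring
    _ = (8 * q) ^ (q - 1) * 4 * θ ^ (-(3 / (q : ℝ))) := by rw [e4]
    _ ≤ (8 * q) ^ (q - 1) * (8 * q) * δ ^ (-(3 / (q : ℝ))) := by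
        gcongr
        linarith
    _ = _ := by rw [e6]

/-- The differential inequality for `S = dser`. By `hasDerivAt_dser` the left-hand side is minus the derivative
of `S` at `σ = 1 + θ`. The first term on the right is the value it would have if `S` were
`exp (∑ p ^ (-σ))`; the second term carries a factor `1 / q`. -/
lemma neg_deriv_dser_le {Ps : Finset ℕ} (hPs : ∀ p ∈ Ps, p.Prime) (N : ℕ) {q : ℕ} (hq : 2 ≤ q)
    {δ θ : ℝ} (hδ : 0 < δ) (hδθ : δ ≤ θ) (hθ1 : θ ≤ 1) :
    ∑ B ∈ Ps.powerset, wt (1 + θ) B * ((1 + 1 / q) ^ (B.card + 1) *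
      ∑ p ∈ Ps \ B, Real.log p * (p : ℝ) ^ (-(1 + θ)) * nrm N q (insert p B)) ≤
    (∑ p ∈ Ps, Real.log p * (p : ℝ) ^ (-(1 + θ))) * dser Ps N q (1 + θ) +
      7 * cK / q / θ * (dser Ps N q (1 + θ) + (8 * q) ^ q * δ ^ (-(3 / (q : ℝ))) *
        Real.exp (∑ p ∈ Ps, (p : ℝ) ^ (-(1 + θ)))) := by
  have hθ : 0 < θ := by linarith
  have hq0 : (0 : ℝ) < q := by positivity
  have hq2 : (2 : ℝ) ≤ q := by exact_mod_cast hq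
  set P := ∑ p ∈ Ps, Real.log p * (p : ℝ) ^ (-(1 + θ)) with hP
  set h := ∑ p ∈ Ps, (p : ℝ) ^ (-(1 + θ)) with hh
  have hw : ∀ p : ℕ, 0 ≤ Real.log p * (p : ℝ) ^ (-(1 + θ)) := fun p =>
    mul_nonneg (Real.log_natCast_nonneg p) (Real.rpow_nonneg (Nat.cast_nonneg _) _)
  have hP0 : 0 ≤ P := Finset.sum_nonneg fun p _ => hw p
  have hPK : P ≤ cK / θ := sum_log_le hPs hθ hθ1
  have hcK := cK_pos
  set z := 8 * q * θ ^ ((q : ℝ)⁻¹) with hz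
  have hz0 : 0 < z := by positivity
  have hzq : z ^ q = (8 * q) ^ q * θ := by
    rw [hz, mul_pow, Real.rpow_inv_natCast_pow hθ.le (by omega)]
  set r : ℝ := 1 + 1 / q with hr
  have hr0 : 0 < r := by positivity
  have hr2 : r ≤ 2 := by
    have : 1 / (q : ℝ) ≤ 1 := by rw [div_le_one hq0]; linarith
    linarith
  have hB : ∀ B ∈ Ps.powerset, r ^ (B.card + 1) *
      ∑ p ∈ Ps \ B, Real.log p * (p : ℝ) ^ (-(1 + θ)) * nrm N q (insert p B) ≤
      P * tnrm N q B + 7 * cK / q / θ * (tnrm N q B + z ^ (q - 1) * (2 * r) ^ B.card) := by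
    intro B _
    have hf := nrm_nonneg N q B
    have key := sum_nrm_insert_le (N := N) hq (A := B) (T := Ps \ B)
      (w := fun p => Real.log p * (p : ℝ) ^ (-(1 + θ))) (K := cK) (P := P) (θ := θ) (z := z)
      (fun p hp => (Finset.mem_sdiff.1 hp).2) hθ (fun p _ => hw p) (fun j => by
        refine (Finset.sum_le_sum_of_subset_of_nonneg (Finset.filter_subset_filter _
          (Finset.sdiff_subset)) fun p _ _ => hw p).trans ?_
        refine (sum_log_cell_le hPs hθ.le j).trans ?_
        have h1 : Real.exp (-θ) ^ j ≤ 1 :=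
          pow_le_one₀ (Real.exp_pos _).le (Real.exp_le_one_iff.2 (by linarith))
        have h2 : 0 ≤ Real.log 4 * Real.exp 1 := by positivity
        unfold cK
        nlinarith)
      (Finset.sum_le_sum_of_subset_of_nonneg Finset.sdiff_subset fun p _ _ => hw p) hPK hz0 hzq
    set f := nrm N q B with hfdef
    set b := z ^ (q - 1) * 2 ^ B.card with hb
    have hb0 : 0 ≤ b := by positivity
    have step : r * (P * f + 3 * cK / (q * θ) * (f + b)) ≤
        P * f + 7 * cK / q / θ * (f + b) := by
      have h1 : 1 / q * (P * f) ≤ 1 / q * (cK / θ * (f + b)) := by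
        have : P * f ≤ cK / θ * (f + b) := by
          have : f ≤ f + b := by linarith
          gcongr
        gcongr
      have h2 : r * (3 * cK / (q * θ) * (f + b)) ≤ 2 * (3 * cK / (q * θ) * (f + b)) := by
        gcongr
      calc r * (P * f + 3 * cK / (q * θ) * (f + b)) =
          P * f + 1 / q * (P * f) + r * (3 * cK / (q * θ) * (f + b)) := by rw [hr]; ring
        _ ≤ P * f + 1 / q * (cK / θ * (f + b)) + 2 * (3 * cK / (q * θ) * (f + b)) := by
            linarith
        _ = _ := by field_simp; ring
    calc _ ≤ r ^ (B.card + 1) * (P * f + 3 * cK / (q * θ) * (f + b)) := by gcongr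
      _ = r ^ B.card * (r * (P * f + 3 * cK / (q * θ) * (f + b))) := by ring
      _ ≤ r ^ B.card * (P * f + 7 * cK / q / θ * (f + b)) := by gcongr
      _ = _ := by
        unfold tnrm
        rw [mul_pow 2 r, ← hr, ← hfdef, hb]
        ring
  calc _ ≤ ∑ B ∈ Ps.powerset, wt (1 + θ) B * (P * tnrm N q B +
        7 * cK / q / θ * (tnrm N q B + z ^ (q - 1) * (2 * r) ^ B.card)) :=
        Finset.sum_le_sum fun B hB' => mul_le_mul_of_nonneg_left (hB B hB') (wt_nonneg _ _)
    _ = P * dser Ps N q (1 + θ) + 7 * cK / q / θ * (dser Ps N q (1 + θ) +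
        z ^ (q - 1) * ∑ B ∈ Ps.powerset, wt (1 + θ) B * (2 * r) ^ B.card) := by
        unfold dser
        simp only [Finset.mul_sum, ← Finset.sum_add_distrib]
        exact Finset.sum_congr rfl fun B _ => by ring
    _ ≤ _ := by
        have h1 := sum_wt_pow_le Ps (1 + θ) (a := 2 * r) (by positivity)
        have h2 := twist_const_le hq hδ hδθ (exp_sum_prime_le hPs hθ hθ1)
        have h3 : z ^ (q - 1) * ∑ B ∈ Ps.powerset, wt (1 + θ) B * (2 * r) ^ B.card ≤
            (8 * q) ^ q * δ ^ (-(3 / (q : ℝ))) * Real.exp h := by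
          refine le_trans ?_ h2
          gcongr
        gcongr

/-- Integrating the differential inequality from `σ = 2` down to `σ = 1 + δ`. -/
lemma dser_le {Ps : Finset ℕ} (hPs : ∀ p ∈ Ps, p.Prime) (N : ℕ) {q : ℕ} (hq : 2 ≤ q)
    {δ : ℝ} (hδ : 0 < δ) (hδ1 : δ ≤ 1) :
    dser Ps N q (1 + δ) ≤ 4 / δ * (8 * q) ^ q * δ ^ (-((7 * cK + 3) / (q : ℝ))) := by
  have hq0 : (0 : ℝ) < q := by positivity
  have hq2 : (2 : ℝ) ≤ q := by exact_mod_cast hq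
  set b := (8 * (q : ℝ)) ^ q * δ ^ (-(3 / (q : ℝ))) with hb
  set c := 7 * cK / q with hc
  have hc0 : 0 ≤ c := by have := cK_pos; positivity
  have hb0 : 0 ≤ b := by positivity
  set h : ℝ → ℝ := fun σ => ∑ p ∈ Ps, (p : ℝ) ^ (-σ) with hh
  set P : ℝ → ℝ := fun σ => ∑ p ∈ Ps, Real.log p * (p : ℝ) ^ (-σ) with hP
  have hh0 : ∀ σ, 0 ≤ h σ := fun σ =>
    Finset.sum_nonneg fun p _ => Real.rpow_nonneg (Nat.cast_nonneg _) _
  set D : ℝ → ℝ := fun σ => ∑ B ∈ Ps.powerset, wt σ B * ((1 + 1 / q) ^ (B.card + 1) *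
      ∑ p ∈ Ps \ B, Real.log p * (p : ℝ) ^ (-σ) * nrm N q (insert p B)) with hD
  have hdh : ∀ σ, HasDerivAt h (-P σ) σ := by
    intro σ
    have := HasDerivAt.fun_sum (u := Ps) (A := fun p (s : ℝ) => (p : ℝ) ^ (-s))
      (A' := fun p => -(Real.log p * (p : ℝ) ^ (-σ))) (x := σ)
      fun p hp => hasDerivAt_rpow_neg (hPs p hp) σ
    rw [Finset.sum_neg_distrib] at this
    exact this
  set V : ℝ → ℝ := fun σ => dser Ps N q σ + b * Real.exp (h σ) with hV
  have hdV : ∀ σ, HasDerivAt V (-D σ + b * (Real.exp (h σ) * (-P σ))) σ := fun σ =>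
    (hasDerivAt_dser hPs N q σ).add ((hdh σ).exp.const_mul b)
  -- `V` absorbs the inhomogeneous term; multiplied by the integrating factor it is monotone.
  set U : ℝ → ℝ := fun σ => V σ * Real.exp (-h σ) * (σ - 1) ^ c with hU
  have hdU : ∀ σ, 1 < σ → HasDerivAt U (((-D σ + b * (Real.exp (h σ) * (-P σ))) *
      Real.exp (-h σ) + V σ * (Real.exp (-h σ) * (- -P σ))) * (σ - 1) ^ c +
      V σ * Real.exp (-h σ) * (c * (σ - 1) ^ (c - 1))) σ := by
    intro σ hσ
    have h1 : HasDerivAt (fun s : ℝ => (s - 1) ^ c) (c * (σ - 1) ^ (c - 1)) σ := by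
      have := ((hasDerivAt_id σ).sub_const 1).rpow_const (p := c)
        (Or.inl (by simp; linarith))
      simpa using this
    exact ((hdV σ).mul (hdh σ).neg.exp).mul h1
  have hmono : MonotoneOn U (Set.Icc (1 + δ) 2) := by
    refine monotoneOn_of_deriv_nonneg (convex_Icc _ _) ?_ ?_ ?_
    · intro σ hσ
      exact (hdU σ (by linarith [hσ.1])).continuousAt.continuousWithinAt
    · intro σ hσ
      rw [interior_Icc] at hσ
      exact (hdU σ (by linarith [hσ.1])).differentiableAt.differentiableWithinAt
    · intro σ hσ
      rw [interior_Icc] at hσ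
      rw [(hdU σ (by linarith [hσ.1])).deriv]
      obtain ⟨θ, rfl⟩ : ∃ θ, σ = 1 + θ := ⟨σ - 1, by ring⟩
      have hθδ : δ ≤ θ := by linarith [hσ.1]
      have hθ : 0 < θ := by linarith
      have key := neg_deriv_dser_le hPs N hq hδ hθδ (by linarith [hσ.2])
      have e1 : (1 + θ - 1) = θ := by ring
      have e2 : θ ^ (c - 1) = θ ^ c / θ := Real.rpow_sub_one hθ.ne' c
      rw [e1, e2]
      have : ((-D (1 + θ) + b * (Real.exp (h (1 + θ)) * (-P (1 + θ)))) *
          Real.exp (-h (1 + θ)) + V (1 + θ) * (Real.exp (-h (1 + θ)) * (- -P (1 + θ)))) * θ ^ c +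
          V (1 + θ) * Real.exp (-h (1 + θ)) * (c * (θ ^ c / θ)) =
          Real.exp (-h (1 + θ)) * θ ^ c * (P (1 + θ) * dser Ps N q (1 + θ) +
          c / θ * (dser Ps N q (1 + θ) + b * Real.exp (h (1 + θ))) - D (1 + θ)) := by
        simp only [hV]
        ring
      rw [this]
      refine mul_nonneg (by positivity) ?_
      linarith
  have hfin := hmono (Set.left_mem_Icc.2 (by linarith)) (Set.right_mem_Icc.2 (by linarith))
    (by linarith : 1 + δ ≤ 2)
  have hH2 : Real.exp (h 2) ≤ 2 := by
    have := exp_sum_prime_le hPs one_pos le_rfl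
    norm_num at this
    simpa [hh] using this
  have hS2 : dser Ps N q 2 ≤ 16 := by
    have hr2 : (1 + 1 / (q : ℝ)) ≤ 2 := by
      have : 1 / (q : ℝ) ≤ 1 := by rw [div_le_one hq0]; linarith
      linarith
    calc dser Ps N q 2 ≤ ∑ A ∈ Ps.powerset, wt 2 A * 4 ^ A.card := by
          refine Finset.sum_le_sum fun A _ => mul_le_mul_of_nonneg_left ?_ (wt_nonneg _ _)
          unfold tnrm
          calc _ ≤ (2 : ℝ) ^ A.card * 2 ^ A.card := by
                have := nrm_le (N := N) (by omega : 1 ≤ q) A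
                have := nrm_nonneg N q A
                gcongr
            _ = _ := by rw [← mul_pow]; norm_num
      _ ≤ Real.exp (4 * h 2) := sum_wt_pow_le Ps 2 (by norm_num)
      _ = Real.exp (h 2) ^ 4 := by rw [← Real.exp_nat_mul]; norm_num
      _ ≤ 2 ^ 4 := by gcongr
      _ = 16 := by norm_num
  have hU2 : U 2 ≤ 16 + b := by
    have e : U 2 = dser Ps N q 2 * Real.exp (-h 2) + b := by
      simp only [hU, hV]
      rw [show (2 : ℝ) - 1 = 1 by norm_num, Real.one_rpow, mul_one, add_mul, mul_assoc b,
        ← Real.exp_add]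
      simp
    rw [e]
    have h1 : Real.exp (-h 2) ≤ 1 := Real.exp_le_one_iff.2 (by linarith [hh0 2])
    have := dser_nonneg Ps N q 2
    have : dser Ps N q 2 * Real.exp (-h 2) ≤ 16 * 1 := by gcongr
    linarith
  have hb16 : 16 ≤ b := by
    have h1 : 1 ≤ δ ^ (-(3 / (q : ℝ))) := by
      refine Real.one_le_rpow_of_pos_of_le_one_of_nonpos hδ hδ1 ?_
      have : 0 ≤ 3 / (q : ℝ) := by positivity
      linarith
    have h2 : (16 : ℝ) ≤ (8 * q) ^ q := by
      calc (16 : ℝ) ≤ (8 * q) ^ 1 := by linarith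
        _ ≤ (8 * q) ^ q := pow_le_pow_right₀ (by linarith) (by omega)
    rw [hb]
    nlinarith
  have hU1 : dser Ps N q (1 + δ) * (Real.exp (-h (1 + δ)) * δ ^ c) ≤ U (1 + δ) := by
    simp only [hU, hV]
    rw [show (1 : ℝ) + δ - 1 = δ by ring]
    have : 0 ≤ b * Real.exp (h (1 + δ)) * (Real.exp (-h (1 + δ)) * δ ^ c) := by positivity
    linarith
  have hH1 : Real.exp (h (1 + δ)) ≤ 2 / δ := exp_sum_prime_le hPs hδ hδ1
  have hpos : 0 < Real.exp (-h (1 + δ)) * δ ^ c := by positivity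
  have hle : dser Ps N q (1 + δ) * (Real.exp (-h (1 + δ)) * δ ^ c) ≤ 2 * b := by linarith
  rw [← le_div_iff₀ hpos] at hle
  refine hle.trans ?_
  have e : 2 * b / (Real.exp (-h (1 + δ)) * δ ^ c) = 2 * b * Real.exp (h (1 + δ)) * δ ^ (-c) := by
    rw [Real.exp_neg, Real.rpow_neg hδ.le]
    field_simp
  rw [e]
  have e2 : δ ^ (-((7 * cK + 3) / (q : ℝ))) = δ ^ (-(3 / (q : ℝ))) * δ ^ (-c) := by
    rw [← Real.rpow_add hδ]
    congr 1
    rw [hc]; ring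
  rw [e2, hb]
  calc _ ≤ 2 * ((8 * (q : ℝ)) ^ q * δ ^ (-(3 / (q : ℝ)))) * (2 / δ) * δ ^ (-c) := by gcongr
    _ = _ := by ring

/-! ### Reduction to a logarithmic sum over squarefree integers -/

/-- The logarithmic sum `∑ Δ(m) / m` over squarefree `m ≤ x`. -/
noncomputable def sqfSum (x : ℕ) : ℝ :=
  ∑ m ∈ (Finset.Icc 1 x).filter Squarefree, (hooleyDelta m : ℝ) / m

lemma sqfSum_nonneg (x : ℕ) : 0 ≤ sqfSum x := Finset.sum_nonneg fun _ _ => by positivity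

lemma sqfSum_mono {x y : ℕ} (h : x ≤ y) : sqfSum x ≤ sqfSum y :=
  Finset.sum_le_sum_of_subset_of_nonneg
    (Finset.filter_subset_filter _ (Finset.Icc_subset_Icc_right h)) fun _ _ _ => by positivity

lemma sum_hooleyDelta_sqf_le (y : ℕ) {Y : ℝ} (hY : (y : ℝ) ≤ Y) :
    ∑ b ∈ (Finset.Icc 1 y).filter Squarefree, (hooleyDelta b : ℝ) ≤ Y * sqfSum y := by
  unfold sqfSum
  rw [Finset.mul_sum]
  refine Finset.sum_le_sum fun b hb => ?_
  simp only [Finset.mem_filter, Finset.mem_Icc] at hb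
  have hb0 : (0 : ℝ) < b := by exact_mod_cast hb.1.1
  have : (b : ℝ) ≤ Y := le_trans (by exact_mod_cast hb.1.2) hY
  rw [← mul_div_assoc, le_div_iff₀ hb0, mul_comm]
  gcongr

lemma log_sqf {b : ℕ} (hb : Squarefree b) : Real.log b = ∑ p ∈ b.primeFactors, Real.log p := by
  conv_lhs => rw [← Nat.prod_primeFactors_of_squarefree hb]
  rw [Nat.cast_prod, Real.log_prod]
  intro p hp
  exact_mod_cast (Nat.prime_of_mem_primeFactors hp).ne_zero

lemma sum_log_prime_le (z : ℕ) :
    ∑ p ∈ (Finset.Icc 1 z).filter Nat.Prime, Real.log p ≤ Real.log 4 * z := by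
  have := Chebyshev.theta_le_log4_mul_x (x := (z : ℝ)) (by positivity)
  refine le_trans (le_of_eq ?_) this
  unfold Chebyshev.theta
  rw [Nat.floor_natCast]
  rfl

/-- Write `log b = ∑ log p` over `p ∣ b`, use `Δ(b) ≤ 2 Δ(b / p)` and sum over `p` by Chebyshev. -/
lemma sum_hooleyDelta_log_le (y : ℕ) :
    ∑ b ∈ (Finset.Icc 1 y).filter Squarefree, (hooleyDelta b : ℝ) * Real.log b ≤
      2 * Real.log 4 * y * sqfSum y := by
  have h1 : ∑ b ∈ (Finset.Icc 1 y).filter Squarefree, (hooleyDelta b : ℝ) * Real.log b =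
      ∑ w ∈ ((Finset.Icc 1 y).filter Squarefree).sigma fun b => b.primeFactors,
        (hooleyDelta w.1 : ℝ) * Real.log w.2 := by
    rw [Finset.sum_sigma]
    refine Finset.sum_congr rfl fun b hb => ?_
    rw [log_sqf (Finset.mem_filter.1 hb).2, Finset.mul_sum]
  have h2 : ∑ w ∈ ((Finset.Icc 1 y).filter Squarefree).sigma fun b => b.primeFactors,
        (hooleyDelta w.1 : ℝ) * Real.log w.2 ≤
      ∑ w ∈ ((Finset.Icc 1 y).filter Squarefree).sigma
        fun m => (Finset.Icc 1 (y / m)).filter Nat.Prime,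
        2 * (hooleyDelta w.1 : ℝ) * Real.log w.2 := by
    refine sum_le_sum_inj (fun w => ⟨w.1 / w.2, w.2⟩) ?_ ?_ ?_ ?_
    · rintro ⟨b, p⟩ h
      simp only [Finset.mem_sigma, Finset.mem_filter, Finset.mem_Icc, Nat.mem_primeFactors] at h ⊢
      obtain ⟨⟨⟨hb1, hby⟩, hsq⟩, hp, hpb, -⟩ := h
      have hpos := Nat.div_pos (Nat.le_of_dvd (by omega) hpb) hp.pos
      refine ⟨⟨⟨hpos, (Nat.div_le_self _ _).trans hby⟩,
        hsq.squarefree_of_dvd (Nat.div_dvd_of_dvd hpb)⟩, ⟨hp.one_le, ?_⟩, hp⟩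
      rw [Nat.le_div_iff_mul_le hpos, Nat.mul_div_cancel' hpb]
      exact hby
    · rintro ⟨b, p⟩ h ⟨b', p'⟩ h' heq
      simp only [Finset.coe_sigma, Set.mem_sigma_iff, Finset.mem_coe,
        Nat.mem_primeFactors, Sigma.mk.injEq, heq_eq_eq] at h h' heq
      obtain ⟨h2, rfl⟩ := heq
      have e1 := Nat.div_mul_cancel h.2.2.1
      have e2 := Nat.div_mul_cancel h'.2.2.1
      rw [h2] at e1
      have : b = b' := e1.symm.trans e2
      subst this
      rfl
    · rintro ⟨b, p⟩ h
      simp only [Finset.mem_sigma, Nat.mem_primeFactors] at h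
      have h3 : hooleyDelta b ≤ 2 * hooleyDelta (b / p) := by
        have := hooleyDelta_mul_le (m := p) (n := b / p)
        rwa [Nat.mul_div_cancel' h.2.2.1, h.2.1.divisors, Finset.card_pair h.2.1.one_lt.ne] at this
      have h4 : (hooleyDelta b : ℝ) ≤ 2 * hooleyDelta (b / p) := by exact_mod_cast h3
      have := Real.log_natCast_nonneg p
      show _ ≤ 2 * (hooleyDelta (b / p) : ℝ) * Real.log p
      gcongr
    · rintro ⟨b, p⟩ _
      have := Real.log_natCast_nonneg p
      positivity
  rw [h1]
  refine h2.trans ?_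
  rw [Finset.sum_sigma]
  unfold sqfSum
  rw [Finset.mul_sum]
  refine Finset.sum_le_sum fun m hm => ?_
  simp only [Finset.mem_filter, Finset.mem_Icc] at hm
  dsimp only
  rw [← Finset.mul_sum]
  have hl : 0 < Real.log 4 := Real.log_pos (by norm_num)
  calc 2 * (hooleyDelta m : ℝ) * ∑ p ∈ (Finset.Icc 1 (y / m)).filter Nat.Prime, Real.log p
      ≤ 2 * (hooleyDelta m : ℝ) * (Real.log 4 * (y / m)) := by
        gcongr
        refine (sum_log_prime_le _).trans ?_
        gcongr
        exact Nat.cast_div_le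
    _ = _ := by ring

/-- The weights that arise from the square part `a²` of `n = a² b`. -/
noncomputable def sqw (a : ℕ) : ℝ :=
  ((a ^ 2).divisors.card : ℝ) / a ^ 2 * (1 + 2 * Real.log 4 + 2 * Real.log a)

/-- Passage from `∑ Δ(n)` to the logarithmic sum over squarefree integers: `log x ≤ x / n + log n`
and `n = a² b` with `b` squarefree. -/
lemma log_mul_sum_le (x : ℕ) :
    Real.log x * ∑ n ∈ Finset.Icc 1 x, (hooleyDelta n : ℝ) ≤
      x * sqfSum x * ∑ a ∈ Finset.Icc 1 x, sqw a := by
  rcases Nat.eq_zero_or_pos x with rfl | hx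
  · simp
  have hx0 : (0 : ℝ) < x := by exact_mod_cast hx
  -- `F` dominates `Δ(n) log x`, by `log (x / n) ≤ x / n`.
  set F : ℕ → ℝ := fun n => hooleyDelta n * (x / n + Real.log n) with hF
  have hF0 : ∀ n, 0 ≤ F n := fun n => by
    have := Real.log_natCast_nonneg n
    positivity
  have h1 : Real.log x * ∑ n ∈ Finset.Icc 1 x, (hooleyDelta n : ℝ) ≤
      ∑ n ∈ Finset.Icc 1 x, F n := by
    rw [Finset.mul_sum]
    refine Finset.sum_le_sum fun n hn => ?_
    have hn0 : (0 : ℝ) < n := by exact_mod_cast (Finset.mem_Icc.1 hn).1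
    rw [mul_comm]
    refine mul_le_mul_of_nonneg_left ?_ (by positivity)
    have := Real.log_le_sub_one_of_pos (div_pos hx0 hn0)
    rw [Real.log_div hx0.ne' hn0.ne'] at this
    linarith
  refine h1.trans ((sum_le_sum_sq_mul x hF0).trans ?_)
  rw [Finset.mul_sum]
  refine Finset.sum_le_sum fun a ha => ?_
  have ha1 := (Finset.mem_Icc.1 ha).1
  have ha0 : (0 : ℝ) < a := by exact_mod_cast ha1
  have hla := Real.log_natCast_nonneg a
  have hl : 0 < Real.log 4 := Real.log_pos (by norm_num)
  set y := x / a ^ 2 with hy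
  have hyx : y ≤ x := Nat.div_le_self _ _
  have hyr : (y : ℝ) ≤ x / a ^ 2 := by
    have : (y : ℝ) ≤ (x : ℝ) / ((a ^ 2 : ℕ) : ℝ) := Nat.cast_div_le
    simpa using this
  have hT := sqfSum_mono hyx
  have hT0 := sqfSum_nonneg y
  set τ : ℝ := ((a ^ 2).divisors.card : ℝ) with hτ
  calc ∑ b ∈ (Finset.Icc 1 y).filter Squarefree, F (a ^ 2 * b)
      ≤ ∑ b ∈ (Finset.Icc 1 y).filter Squarefree, τ * (x / a ^ 2 * ((hooleyDelta b : ℝ) / b) +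
          2 * Real.log a * hooleyDelta b + hooleyDelta b * Real.log b) := by
        refine Finset.sum_le_sum fun b hb => ?_
        simp only [Finset.mem_filter, Finset.mem_Icc] at hb
        have hb0 : (0 : ℝ) < b := by exact_mod_cast hb.1.1
        have hlb := Real.log_natCast_nonneg b
        have h3 : (hooleyDelta (a ^ 2 * b) : ℝ) ≤ τ * hooleyDelta b := by
          rw [hτ]
          exact_mod_cast hooleyDelta_mul_le (m := a ^ 2) (n := b)
        have e : Real.log ((a ^ 2 * b : ℕ) : ℝ) = 2 * Real.log a + Real.log b := by
          push_cast
          rw [Real.log_mul (by positivity) (by positivity), Real.log_pow]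
          norm_num
        show (hooleyDelta (a ^ 2 * b) : ℝ) * (x / ((a ^ 2 * b : ℕ) : ℝ) +
          Real.log ((a ^ 2 * b : ℕ) : ℝ)) ≤ _
        rw [e]
        push_cast
        calc _ ≤ τ * hooleyDelta b * (x / ((a : ℝ) ^ 2 * b) + (2 * Real.log a + Real.log b)) := by
              gcongr
          _ = _ := by field_simp; ring
    _ = τ * (x / a ^ 2 * sqfSum y + 2 * Real.log a *
          ∑ b ∈ (Finset.Icc 1 y).filter Squarefree, (hooleyDelta b : ℝ) +
          ∑ b ∈ (Finset.Icc 1 y).filter Squarefree, (hooleyDelta b : ℝ) * Real.log b) := by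
        unfold sqfSum
        simp only [Finset.mul_sum, ← Finset.sum_add_distrib, mul_add]
    _ ≤ τ * (x / a ^ 2 * sqfSum y + 2 * Real.log a * (x / a ^ 2 * sqfSum y) +
          2 * Real.log 4 * (x / a ^ 2) * sqfSum y) := by
        gcongr
        · exact sum_hooleyDelta_sqf_le y hyr
        · refine (sum_hooleyDelta_log_le y).trans ?_
          gcongr
    _ = x * sqfSum y * sqw a := by
        unfold sqw
        field_simp
        ring
    _ ≤ _ := by
        have : 0 ≤ sqw a := by unfold sqw; positivity
        gcongr

lemma card_divisors_le (a : ℕ) : (a.divisors.card : ℝ) ≤ 2 * Real.sqrt a := by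
  have h : a.divisors.card ≤ 2 * Nat.sqrt a := by
    have hsub : a.divisors ⊆ (Finset.Icc 1 (Nat.sqrt a)) ∪
        (Finset.Icc 1 (Nat.sqrt a)).image (a / ·) := by
      intro d hd
      rw [Nat.mem_divisors] at hd
      obtain ⟨⟨e, rfl⟩, h0⟩ := hd
      have hd0 : 0 < d := Nat.pos_of_ne_zero (left_ne_zero_of_mul h0)
      have he0 : 0 < e := Nat.pos_of_ne_zero (right_ne_zero_of_mul h0)
      simp only [Finset.mem_union, Finset.mem_image, Finset.mem_Icc]
      rcases le_total d e with hde | hde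
      · left
        exact ⟨hd0, Nat.le_sqrt.2 (Nat.mul_le_mul_left d hde)⟩
      · right
        exact ⟨e, ⟨he0, Nat.le_sqrt.2 (Nat.mul_le_mul_right e hde)⟩, Nat.mul_div_cancel _ he0⟩
    refine (Finset.card_le_card hsub).trans ((Finset.card_union_le _ _).trans ?_)
    have := Finset.card_image_le (s := Finset.Icc 1 (Nat.sqrt a)) (f := (a / ·))
    simp only [Nat.card_Icc] at this ⊢
    omega
  calc (a.divisors.card : ℝ) ≤ 2 * (Nat.sqrt a : ℕ) := by exact_mod_cast h
    _ ≤ _ := by gcongr; exact Real.nat_sqrt_le_real_sqrt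

/-- Convergence of `∑ sqw a`. With `f(n) = n ^ (-5/4)`, the weight `sqw a` is `O(τ(a) f(a))`, and
`τ f` is the Dirichlet convolution of `f` with itself. -/
lemma sum_sqw_le : ∃ C : ℝ, 0 < C ∧ ∀ x : ℕ, ∑ a ∈ Finset.Icc 1 x, sqw a ≤ C := by
  set f : ℕ → ℝ := fun n => (n : ℝ) ^ (-(5 / 4) : ℝ) with hf
  have hf0 : ∀ n, 0 ≤ f n := fun n => Real.rpow_nonneg (Nat.cast_nonneg _) _
  have hs : Summable f := Real.summable_nat_rpow.2 (by norm_num)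
  have hl : 0 < Real.log 4 := Real.log_pos (by norm_num)
  set M : ℝ := 2 * (1 + 2 * Real.log 4 + 8) with hM
  have hM0 : 0 < M := by positivity
  refine ⟨M * ((∑' n, f n) * (∑' n, f n)) + 1, by
    have : 0 ≤ ∑' n, f n := tsum_nonneg hf0
    positivity, fun x => ?_⟩
  have key : ∀ a ∈ Finset.Icc 1 x, sqw a ≤ M * ∑ d ∈ a.divisors, f d * f (a / d) := by
    intro a ha
    have ha1 := (Finset.mem_Icc.1 ha).1
    have ha0 : (0 : ℝ) < a := by exact_mod_cast ha1
    have ha1' : (1 : ℝ) ≤ a := by exact_mod_cast ha1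
    have hla := Real.log_natCast_nonneg a
    have e1 : ∑ d ∈ a.divisors, f d * f (a / d) = a.divisors.card * f a := by
      rw [Finset.sum_congr rfl (g := fun _ => f a), Finset.sum_const, nsmul_eq_mul]
      intro d hd
      have hd' := (Nat.mem_divisors.1 hd).1
      simp only [hf]
      rw [← Real.mul_rpow (Nat.cast_nonneg _) (Nat.cast_nonneg _), ← Nat.cast_mul,
        Nat.mul_div_cancel' hd']
    rw [e1]
    have h1 : (((a ^ 2).divisors.card : ℕ) : ℝ) ≤ a.divisors.card * (2 * Real.sqrt a) := by
      calc (((a ^ 2).divisors.card : ℕ) : ℝ) ≤ a.divisors.card * a.divisors.card := by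
            rw [sq]; exact_mod_cast card_divisors_mul_le a a
        _ ≤ _ := by gcongr; exact card_divisors_le a
    have h2 : Real.log a ≤ 4 * (a : ℝ) ^ (1 / 4 : ℝ) := by
      have := Real.log_le_rpow_div ha0.le (ε := 1 / 4) (by norm_num)
      linarith
    have h3 : (1 : ℝ) ≤ (a : ℝ) ^ (1 / 4 : ℝ) := Real.one_le_rpow ha1' (by norm_num)
    unfold sqw
    calc ((a ^ 2).divisors.card : ℝ) / a ^ 2 * (1 + 2 * Real.log 4 + 2 * Real.log a)
        ≤ (a.divisors.card * (2 * Real.sqrt a)) / a ^ 2 *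
          ((1 + 2 * Real.log 4 + 8) * (a : ℝ) ^ (1 / 4 : ℝ)) := by
          gcongr
          nlinarith
      _ = M * (a.divisors.card * (Real.sqrt a * (a : ℝ) ^ (1 / 4 : ℝ) / a ^ 2)) := by
          rw [hM]; ring
      _ = _ := by
          congr 2
          rw [Real.sqrt_eq_rpow, ← Real.rpow_natCast, ← Real.rpow_add ha0, ← Real.rpow_sub ha0]
          simp only [hf]
          norm_num
  calc _ ≤ ∑ a ∈ Finset.Icc 1 x, M * ∑ d ∈ a.divisors, f d * f (a / d) := Finset.sum_le_sum key
    _ ≤ M * ((∑ n ∈ Finset.Icc 1 x, f n) * ∑ n ∈ Finset.Icc 1 x, f n) := by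
        rw [← Finset.mul_sum]
        exact mul_le_mul_of_nonneg_left (sum_divisors_le x hf0 hf0) hM0.le
    _ ≤ M * ((∑' n, f n) * ∑' n, f n) := by
        have h1 := hs.sum_le_tsum (Finset.Icc 1 x) fun n _ => hf0 n
        have h2 : 0 ≤ ∑ n ∈ Finset.Icc 1 x, f n := Finset.sum_nonneg fun n _ => hf0 n
        gcongr
    _ ≤ _ := by linarith

/-! ### The upper bound -/

lemma cell_le {p : ℕ} : (cell p : ℝ) ≤ Real.log p := Nat.floor_le (Real.log_natCast_nonneg p)

lemma lt_cell {p : ℕ} : Real.log p < cell p + 1 := Nat.lt_floor_add_one _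

/-- A window `(u, u + 1]` for `log d` confines the sum of the cells of the primes dividing `d` to
`#A + 1` consecutive integers. -/
lemma hooleyDelta_prod_le {A : Finset ℕ} (hA : ∀ p ∈ A, p.Prime) {M : ℝ}
    (hM : ∀ k, cnt A k ≤ M) : (hooleyDelta (∏ p ∈ A, p) : ℝ) ≤ (A.card + 1) * M := by
  have hM0 : 0 ≤ M := (cnt_nonneg A 0).trans (hM 0)
  set n := ∏ p ∈ A, p with hn
  have hn0 : n ≠ 0 := Finset.prod_ne_zero_iff.2 fun p hp => (hA p hp).ne_zero
  have hpf : n.primeFactors = A := Nat.primeFactors_prod hA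
  have hsq : Squarefree n := by
    rw [hn]
    refine Finset.squarefree_prod_of_pairwise_isCoprime ?_ fun p hp => (hA p hp).prime.squarefree
    intro p hp q hq hpq
    exact Nat.coprime_iff_isRelPrime.1 ((Nat.coprime_primes (hA p hp) (hA q hq)).2 hpq)
  suffices h : ∀ u, ((win n u).card : ℝ) ≤ (A.card + 1) * M by
    have h2 : hooleyDelta n ≤ ⌊(A.card + 1) * M⌋₊ :=
      hooleyDelta_le fun u => Nat.le_floor (h u)
    exact (Nat.cast_le.2 h2).trans (Nat.floor_le (by positivity))
  intro u
  set K := ⌊u + 1⌋₊ with hK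
  have h1 : (win n u).card ≤ (A.powerset.filter
      fun B => ∑ p ∈ B, cell p ∈ Finset.Icc (K - A.card) K).card := by
    refine Finset.card_le_card_of_injOn Nat.primeFactors ?_ ?_
    · intro d hd
      rw [Finset.mem_coe, mem_win] at hd
      obtain ⟨⟨hdn, -⟩, hd1, hd2⟩ := hd
      have hsub : d.primeFactors ⊆ A := hpf ▸ Nat.primeFactors_mono hdn hn0
      rw [log_sqf (hsq.squarefree_of_dvd hdn)] at hd1 hd2
      have hle : ((∑ p ∈ d.primeFactors, cell p : ℕ) : ℝ) ≤ ∑ p ∈ d.primeFactors, Real.log p := by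
        push_cast
        exact Finset.sum_le_sum fun p _ => cell_le
      have hge : ∑ p ∈ d.primeFactors, Real.log p ≤
          ((∑ p ∈ d.primeFactors, cell p : ℕ) : ℝ) + A.card := by
        have h3 : ∑ p ∈ d.primeFactors, Real.log p ≤
            ∑ p ∈ d.primeFactors, ((cell p : ℝ) + 1) :=
          Finset.sum_le_sum fun p _ => lt_cell.le
        rw [Finset.sum_add_distrib, Finset.sum_const, nsmul_eq_mul, mul_one] at h3
        have h4 : (d.primeFactors.card : ℝ) ≤ A.card := by
          exact_mod_cast Finset.card_le_card hsub
        push_cast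
        linarith
      simp only [Finset.coe_filter, Finset.mem_powerset, Finset.mem_Icc, Set.mem_ofPred_eq]
      refine ⟨hsub, ?_, Nat.le_floor (hle.trans hd2)⟩
      rw [Nat.sub_le_iff_le_add, ← Nat.lt_succ_iff, hK,
        Nat.floor_lt' (Nat.succ_ne_zero _)]
      push_cast at hge ⊢
      linarith
    · intro d hd d' hd' h
      rw [Finset.mem_coe, mem_win] at hd hd'
      rw [← Nat.prod_primeFactors_of_squarefree (hsq.squarefree_of_dvd hd.1.1),
        ← Nat.prod_primeFactors_of_squarefree (hsq.squarefree_of_dvd hd'.1.1), h]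
  have h2 : ((A.powerset.filter
      fun B => ∑ p ∈ B, cell p ∈ Finset.Icc (K - A.card) K).card : ℝ) =
      ∑ k ∈ Finset.Icc (K - A.card) K, cnt A k := by
    unfold cnt
    rw [Finset.sum_comm, Finset.card_filter]
    push_cast
    refine Finset.sum_congr rfl fun B _ => ?_
    rw [Finset.sum_ite_eq]
  calc ((win n u).card : ℝ) ≤ ∑ k ∈ Finset.Icc (K - A.card) K, cnt A k := by
        rw [← h2]; exact_mod_cast h1
    _ ≤ ∑ k ∈ Finset.Icc (K - A.card) K, M := Finset.sum_le_sum fun k _ => hM k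
    _ = (K + 1 - (K - A.card) : ℕ) * M := by rw [Finset.sum_const, nsmul_eq_mul, Nat.card_Icc]
    _ ≤ _ := by
        gcongr
        have : K + 1 - (K - A.card) ≤ A.card + 1 := by omega
        exact_mod_cast this

lemma cnt_le_nrm' {N q : ℕ} (hq : 1 ≤ q) {A : Finset ℕ} (hN : ∑ p ∈ A, cell p < N) (k : ℕ) :
    cnt A k ≤ nrm N q A := by
  by_cases hk : k < N
  · exact cnt_le_nrm hq hk
  · refine le_trans (le_of_eq ?_) (nrm_nonneg N q A)
    refine Finset.sum_eq_zero fun B hB => if_neg ?_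
    have := Finset.sum_le_sum_of_subset (f := cell) (Finset.mem_powerset.1 hB)
    omega

lemma hooleyDelta_prod_le_tnrm {N q : ℕ} (hq : 1 ≤ q) {A : Finset ℕ} (hA : ∀ p ∈ A, p.Prime)
    (hN : ∑ p ∈ A, cell p < N) : (hooleyDelta (∏ p ∈ A, p) : ℝ) ≤ q * tnrm N q A := by
  refine (hooleyDelta_prod_le hA (cnt_le_nrm' hq hN)).trans ?_
  unfold tnrm
  rw [← mul_assoc]
  refine mul_le_mul_of_nonneg_right ?_ (nrm_nonneg _ _ _)
  have hq1 : (1 : ℝ) ≤ q := by exact_mod_cast hq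
  have h := one_add_mul_le_pow (a := (1 / q : ℝ)) (by
    have : (0 : ℝ) ≤ 1 / q := by positivity
    linarith) A.card
  calc (A.card : ℝ) + 1 ≤ q * (1 + A.card * (1 / q)) := by
        have : (q : ℝ) * (1 + A.card * (1 / q)) = q + A.card := by field_simp
        linarith
    _ ≤ _ := by gcongr

/-- Rankin: for `m ≤ x` one has `1 / m ≤ e · m ^ (-1 - 1 / log x)`. -/
lemma sqfSum_le {x : ℕ} (hx : 1 < x) {q : ℕ} (hq : 1 ≤ q) : ∃ N : ℕ,
    sqfSum x ≤ Real.exp 1 * q *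
      dser ((Finset.Icc 1 x).filter Nat.Prime) N q (1 + 1 / Real.log x) := by
  set Ps := (Finset.Icc 1 x).filter Nat.Prime with hPs
  have hx1 : (1 : ℝ) < x := by exact_mod_cast hx
  have hL : 0 < Real.log x := Real.log_pos hx1
  set δ := 1 / Real.log x with hδ
  have hδ0 : 0 < δ := by positivity
  refine ⟨∑ p ∈ Ps, cell p + 1, ?_⟩
  unfold sqfSum dser
  rw [Finset.mul_sum]
  refine sum_le_sum_inj Nat.primeFactors ?_ ?_ ?_ ?_
  · intro m hm
    simp only [Finset.mem_filter, Finset.mem_Icc] at hm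
    rw [Finset.mem_powerset]
    intro p hp
    rw [Nat.mem_primeFactors] at hp
    simp only [hPs, Finset.mem_filter, Finset.mem_Icc]
    exact ⟨⟨hp.1.one_le, (Nat.le_of_dvd (by omega) hp.2.1).trans hm.1.2⟩, hp.1⟩
  · intro m hm m' hm' h
    simp only [Finset.coe_filter, Set.mem_ofPred_eq] at hm hm'
    rw [← Nat.prod_primeFactors_of_squarefree hm.2,
      ← Nat.prod_primeFactors_of_squarefree hm'.2, h]
  · intro m hm
    simp only [Finset.mem_filter, Finset.mem_Icc] at hm
    have hm0 : (0 : ℝ) < m := by exact_mod_cast hm.1.1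
    have hsub : m.primeFactors ⊆ Ps := by
      intro p hp
      rw [Nat.mem_primeFactors] at hp
      simp only [hPs, Finset.mem_filter, Finset.mem_Icc]
      exact ⟨⟨hp.1.one_le, (Nat.le_of_dvd (by omega) hp.2.1).trans hm.1.2⟩, hp.1⟩
    have h1 := hooleyDelta_prod_le_tnrm hq (A := m.primeFactors)
      (N := ∑ p ∈ Ps, cell p + 1) (fun p hp => Nat.prime_of_mem_primeFactors hp)
      (Nat.lt_succ_of_le (Finset.sum_le_sum_of_subset hsub))
    rw [Nat.prod_primeFactors_of_squarefree hm.2] at h1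
    have h2 : wt (1 + δ) m.primeFactors = (m : ℝ) ^ (-(1 + δ)) := by
      unfold wt
      rw [Real.finsetProd_rpow _ _ fun p _ => Nat.cast_nonneg p, ← Nat.cast_prod,
        Nat.prod_primeFactors_of_squarefree hm.2]
    have h3 : (1 : ℝ) / m ≤ Real.exp 1 * (m : ℝ) ^ (-(1 + δ)) := by
      have h4 : (m : ℝ) ^ δ ≤ Real.exp 1 := by
        calc (m : ℝ) ^ δ ≤ (x : ℝ) ^ δ := by
              gcongr
              exact_mod_cast hm.1.2
          _ = Real.exp 1 := by
              rw [Real.rpow_def_of_pos (by linarith), hδ, mul_one_div_cancel hL.ne']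
      have h5 : (1 : ℝ) / m = (m : ℝ) ^ δ * (m : ℝ) ^ (-(1 + δ)) := by
        rw [← Real.rpow_add hm0, show δ + -(1 + δ) = -1 by ring, Real.rpow_neg_one, one_div]
      rw [h5]
      gcongr
    rw [h2]
    calc (hooleyDelta m : ℝ) / m = hooleyDelta m * (1 / m) := by ring
      _ ≤ (q * tnrm (∑ p ∈ Ps, cell p + 1) q m.primeFactors) *
          (Real.exp 1 * (m : ℝ) ^ (-(1 + δ))) := by
          have := tnrm_nonneg (∑ p ∈ Ps, cell p + 1) q m.primeFactors
          gcongr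
      _ = _ := by ring
  · intro A _
    have h1 := tnrm_nonneg (∑ p ∈ Ps, cell p + 1) q A
    have h2 := wt_nonneg (1 + δ) A
    positivity

/-- The bound for the average, with a free parameter `q`. -/
lemma sAvg_le_param : ∃ C₁ C₂ : ℝ, 0 < C₁ ∧ 0 < C₂ ∧ ∀ x : ℕ, 3 ≤ x → ∀ q : ℕ, 2 ≤ q →
    sAvg x ≤ C₁ * (q * (8 * q) ^ q * Real.exp (C₂ * Real.log (Real.log x) / q)) := by
  obtain ⟨C, hC, hCx⟩ := sum_sqw_le
  have hcK := cK_pos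
  refine ⟨C * (4 * Real.exp 1), 7 * cK + 3, by positivity, by positivity, fun x hx q hq => ?_⟩
  have hx0 : (0 : ℝ) < x := by positivity
  have hL1 : 1 ≤ Real.log x := by
    rw [Real.le_log_iff_exp_le hx0]
    have := Real.exp_one_lt_d9
    have h3 : (3 : ℝ) ≤ x := by exact_mod_cast hx
    linarith
  have hL : 0 < Real.log x := by linarith
  obtain ⟨N, hN⟩ := sqfSum_le (x := x) (by omega) (q := q) (by omega)
  have h1 := dser_le (Ps := (Finset.Icc 1 x).filter Nat.Prime)
    (fun p hp => (Finset.mem_filter.1 hp).2) N hq (δ := 1 / Real.log x) (by positivity)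
    (by rw [div_le_one hL]; exact hL1)
  have h2 : (1 / Real.log x) ^ (-((7 * cK + 3) / (q : ℝ))) =
      Real.exp ((7 * cK + 3) * Real.log (Real.log x) / q) := by
    rw [Real.rpow_def_of_pos (by positivity), one_div, Real.log_inv]
    congr 1
    ring
  rw [h2] at h1
  set W := Real.exp ((7 * cK + 3) * Real.log (Real.log x) / q) with hW
  have h3 : Real.log x * ∑ n ∈ Finset.Icc 1 x, (hooleyDelta n : ℝ) ≤
      x * (Real.exp 1 * q * (4 / (1 / Real.log x) * (8 * q) ^ q * W)) * C := by
    refine (log_mul_sum_le x).trans ?_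
    have := sqfSum_nonneg x
    have hw : 0 ≤ ∑ a ∈ Finset.Icc 1 x, sqw a := Finset.sum_nonneg fun a _ => by
      have := Real.log_natCast_nonneg a
      have : 0 < Real.log 4 := Real.log_pos (by norm_num)
      unfold sqw
      positivity
    gcongr
    · exact hN.trans (by gcongr)
    · exact hCx x
  unfold sAvg
  rw [div_le_iff₀ hx0]
  refine le_of_mul_le_mul_left (h3.trans (le_of_eq ?_)) hL
  field_simp

/-- The upper bound, by taking `q` of order `√(t / log t)` with `t = log log x`. -/
lemma upper_bound : ∃ c : ℝ, 0 < c ∧ ∀ᶠ x : ℕ in atTop,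
    sAvg x ≤ Real.exp (c * Real.sqrt
        (Real.log (Real.log x) * Real.log (Real.log (Real.log x)))) := by
  obtain ⟨C₁, C₂, hC₁, hC₂, h⟩ := sAvg_le_param
  have ht : Tendsto (fun x : ℕ => Real.log (Real.log x)) atTop atTop :=
    Real.tendsto_log_atTop.comp (Real.tendsto_log_atTop.comp tendsto_natCast_atTop_atTop)
  refine ⟨|Real.log C₁| + 8 + C₂, by positivity, ?_⟩
  filter_upwards [eventually_ge_atTop 3, ht.eventually_ge_atTop 16] with x hx ht16
  set t := Real.log (Real.log x) with htdef
  set l := Real.log t with hl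
  have ht0 : 0 < t := by linarith
  have hl1 : 1 ≤ l := by
    rw [hl, Real.le_log_iff_exp_le ht0]
    have := Real.exp_one_lt_d9
    linarith
  have hlt : l < t := by
    have := Real.log_le_sub_one_of_pos ht0
    linarith
  have hl0 : 0 < l := by linarith
  set R := Real.sqrt (t * l) with hR
  have hR1 : 1 ≤ R := Real.one_le_sqrt.2 (by nlinarith)
  have hRR : R * R = t * l := Real.mul_self_sqrt (by positivity)
  -- `R / l = √(t / l)` is the optimal size of the exponent `q`.
  set y := R / l with hy
  have hyy : y * y = t / l := by
    rw [hy, div_mul_div_comm, hRR]; field_simp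
  have hy1 : 1 < y := by
    by_contra! hle
    have hy0 : 0 < y := by positivity
    have : 1 < t / l := (one_lt_div hl0).2 hlt
    nlinarith
  have hyt : y ≤ t := by
    have h1 : t / l ≤ t := div_le_self ht0.le hl1
    nlinarith
  set q := ⌈y⌉₊ with hq
  have hqy : y ≤ q := Nat.le_ceil y
  have hq2y : (q : ℝ) ≤ 2 * y := by
    have := Nat.ceil_lt_add_one (a := y) (by linarith)
    linarith
  have hq2 : 2 ≤ q := by
    have : 1 < q := Nat.lt_ceil.2 (by simpa using hy1)
    omega
  have hq0 : (0 : ℝ) < q := by positivity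
  have hl8 : Real.log (8 * q) ≤ 2 * l := by
    rw [hl, show (2 : ℝ) * Real.log t = Real.log (t ^ 2) by rw [Real.log_pow]; norm_num]
    refine Real.log_le_log (by positivity) ?_
    nlinarith
  have hlq : Real.log q ≤ Real.log (8 * q) := Real.log_le_log hq0 (by linarith)
  have hl80 : 0 ≤ Real.log (8 * q) := by
    refine Real.log_nonneg ?_
    have : (2 : ℝ) ≤ q := by exact_mod_cast hq2
    linarith
  refine (h x hx q hq2).trans ?_
  have e1 : C₁ * (q * (8 * q) ^ q * Real.exp (C₂ * t / q)) =
      Real.exp (Real.log C₁ + (Real.log q + q * Real.log (8 * q) + C₂ * t / q)) := by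
    rw [Real.exp_add, Real.exp_add, Real.exp_add, Real.exp_log hC₁, Real.exp_log hq0,
      mul_comm (q : ℝ) (Real.log (8 * q)), Real.exp_mul, Real.exp_log (by positivity),
      Real.rpow_natCast]
  rw [e1, Real.exp_le_exp]
  have b1 : Real.log C₁ ≤ |Real.log C₁| * R :=
    (le_abs_self _).trans (le_mul_of_one_le_right (abs_nonneg _) hR1)
  have hyl : y * l = R := by rw [hy]; field_simp
  have b2 : Real.log q + q * Real.log (8 * q) ≤ 8 * R := by
    have h1 : (1 : ℝ) ≤ q := by
      have : (2 : ℝ) ≤ q := by exact_mod_cast hq2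
      linarith
    calc Real.log q + q * Real.log (8 * q) ≤ q * Real.log (8 * q) + q * Real.log (8 * q) := by
          nlinarith
      _ = 2 * q * Real.log (8 * q) := by ring
      _ ≤ 2 * (2 * y) * (2 * l) := by gcongr
      _ = _ := by rw [← hyl]; ring
  have b3 : C₂ * t / q ≤ C₂ * R := by
    rw [div_le_iff₀ hq0]
    have : t ≤ R * q := by
      calc t = R * y := by rw [hy, mul_div_assoc', hRR]; field_simp
        _ ≤ _ := by gcongr
    nlinarith
  linarith

/-! ### Near pairs of divisors -/

/-- `a` and `b` lie within a factor `e` of each other. -/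
def near (a b : ℕ) : Prop := |Real.log a - Real.log b| ≤ 1

/-- The number of divisors, as a real number. -/
noncomputable def tau (a : ℕ) : ℝ := a.divisors.card

lemma tau_nonneg (a : ℕ) : 0 ≤ tau a := Nat.cast_nonneg _

lemma tau_pos {a : ℕ} (ha : a ≠ 0) : 0 < tau a := by
  unfold tau
  exact_mod_cast Finset.card_pos.2 (Nat.nonempty_divisors.2 ha)

/-- For a fixed divisor `d`, the divisors near `d` lie in three windows of length `1`. -/
lemma card_near_le (n : ℕ) :
    ((n.divisors ×ˢ n.divisors).filter fun w => near w.1 w.2).card ≤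
      3 * hooleyDelta n * n.divisors.card := by
  refine Finset.card_le_mul_card_image_of_maps_to (f := Prod.fst) (t := n.divisors) ?_ _ ?_
  · intro w hw
    exact (Finset.mem_product.1 (Finset.mem_filter.1 hw).1).1
  · intro d _
    have h1 : (((n.divisors ×ˢ n.divisors).filter fun w => near w.1 w.2).filter
        fun w => w.1 = d).card ≤
        (win n (Real.log d - 2) ∪ win n (Real.log d - 1) ∪ win n (Real.log d)).card := by
      refine Finset.card_le_card_of_injOn Prod.snd ?_ ?_
      · rintro ⟨a, b⟩ h
        simp only [Finset.coe_filter, Finset.mem_filter, Finset.mem_product, Nat.mem_divisors,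
          Set.mem_ofPred_eq] at h
        obtain ⟨⟨⟨-, hb⟩, hab⟩, rfl⟩ := h
        unfold near at hab
        rw [abs_le] at hab
        simp only [Finset.coe_union, Set.mem_union, Finset.mem_coe, mem_win]
        by_cases c1 : Real.log a < Real.log b
        · exact Or.inr ⟨hb, c1, by linarith⟩
        · by_cases c2 : Real.log a - 1 < Real.log b
          · exact Or.inl (Or.inr ⟨hb, c2, by linarith⟩)
          · exact Or.inl (Or.inl ⟨hb, by linarith, by linarith⟩)
      · rintro ⟨a, b⟩ h ⟨a', b'⟩ h' hbb
        simp only [Finset.coe_filter, Set.mem_ofPred_eq] at h h'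
        rw [Prod.mk.injEq]
        exact ⟨h.2.trans h'.2.symm, hbb⟩
    have h2 := Finset.card_union_le (win n (Real.log d - 2) ∪ win n (Real.log d - 1))
      (win n (Real.log d))
    have h3 := Finset.card_union_le (win n (Real.log d - 2)) (win n (Real.log d - 1))
    have h4 := card_win_le_hooleyDelta n (Real.log d - 2)
    have h5 := card_win_le_hooleyDelta n (Real.log d - 1)
    have h6 := card_win_le_hooleyDelta n (Real.log d)
    omega

/-- The pairs of coprime neighbouring integers whose product divides `n`. -/
noncomputable def cpairs (n : ℕ) : Finset (ℕ × ℕ) :=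
  (n.divisors ×ˢ n.divisors).filter fun w => (w.1.Coprime w.2 ∧ near w.1 w.2) ∧ w.1 * w.2 ∣ n

/-- Every coprime pair `(a, b)` with `a b ∣ n` accounts for the pairs `(g a, g b)` of divisors,
where `g ∣ n / (a b)`. -/
lemma sum_cpairs_le {n : ℕ} (hn : n ≠ 0) :
    ∑ w ∈ cpairs n, 1 / (tau w.1 * tau w.2) ≤ 3 * hooleyDelta n := by
  have hτ := tau_pos hn
  have h1 : ((cpairs n).sigma fun w => (n / (w.1 * w.2)).divisors).card ≤
      ((n.divisors ×ˢ n.divisors).filter fun w => near w.1 w.2).card := by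
    refine Finset.card_le_card_of_injOn (fun v => (v.2 * v.1.1, v.2 * v.1.2)) ?_ ?_
    · rintro ⟨⟨a, b⟩, g⟩ h
      simp only [cpairs, Finset.coe_sigma, Set.mem_sigma_iff, Finset.mem_coe, Finset.mem_filter,
        Finset.mem_product, Nat.mem_divisors] at h ⊢
      obtain ⟨⟨⟨⟨ha, -⟩, hb, -⟩, ⟨hc, hnear⟩, hab⟩, hg, hg0⟩ := h
      have hgab : g * (a * b) ∣ n := by
        have := Nat.mul_dvd_mul_right hg (a * b)
        rwa [Nat.div_mul_cancel hab] at this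
      have ha0 : (a : ℝ) ≠ 0 := by exact_mod_cast ne_zero_of_dvd_ne_zero hn ha
      have hb0 : (b : ℝ) ≠ 0 := by exact_mod_cast ne_zero_of_dvd_ne_zero hn hb
      have hgr : (g : ℝ) ≠ 0 := by exact_mod_cast ne_zero_of_dvd_ne_zero hg0 hg
      refine ⟨⟨⟨?_, hn⟩, ?_, hn⟩, ?_⟩
      · exact (Dvd.intro b (by ring)).trans hgab
      · exact (Dvd.intro a (by ring)).trans hgab
      · unfold near at hnear ⊢
        push_cast
        rw [Real.log_mul hgr ha0, Real.log_mul hgr hb0]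
        simpa using hnear
    · rintro ⟨⟨a, b⟩, g⟩ h ⟨⟨a', b'⟩, g'⟩ h' heq
      simp only [cpairs, Finset.coe_sigma, Set.mem_sigma_iff, Finset.mem_coe, Finset.mem_filter,
        Finset.mem_product, Nat.mem_divisors, Prod.mk.injEq] at h h' heq
      have hc := h.1.2.1.1
      have hc' := h'.1.2.1.1
      have hg : g = g' := by
        have e1 : Nat.gcd (g * a) (g * b) = g := by rw [Nat.gcd_mul_left, hc, mul_one]
        have e2 : Nat.gcd (g' * a') (g' * b') = g' := by rw [Nat.gcd_mul_left, hc', mul_one]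
        rw [← e1, ← e2, heq.1, heq.2]
      subst hg
      have hg0 : 0 < g := Nat.pos_of_ne_zero (ne_zero_of_dvd_ne_zero h.2.2 h.2.1)
      have ea := Nat.eq_of_mul_eq_mul_left hg0 heq.1
      have eb := Nat.eq_of_mul_eq_mul_left hg0 heq.2
      subst ea eb
      rfl
  have h2 := h1.trans (card_near_le n)
  rw [Finset.card_sigma] at h2
  have h3 : ∑ w ∈ cpairs n, tau (n / (w.1 * w.2)) ≤ 3 * hooleyDelta n * tau n := by
    unfold tau
    exact_mod_cast h2
  have h4 : ∑ w ∈ cpairs n, tau n * (1 / (tau w.1 * tau w.2)) ≤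
      ∑ w ∈ cpairs n, tau (n / (w.1 * w.2)) := by
    refine Finset.sum_le_sum fun w hw => ?_
    simp only [cpairs, Finset.mem_filter, Finset.mem_product, Nat.mem_divisors] at hw
    obtain ⟨⟨⟨ha, -⟩, hb, -⟩, -, hab⟩ := hw
    have ha0 := tau_pos (ne_zero_of_dvd_ne_zero hn ha)
    have hb0 := tau_pos (ne_zero_of_dvd_ne_zero hn hb)
    rw [mul_one_div, div_le_iff₀ (by positivity)]
    have h5 := card_divisors_mul_le (n / (w.1 * w.2)) (w.1 * w.2)
    rw [Nat.div_mul_cancel hab] at h5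
    have h6 := h5.trans (Nat.mul_le_mul_left _ (card_divisors_mul_le w.1 w.2))
    unfold tau
    exact_mod_cast h6
  rw [← Finset.mul_sum] at h4
  refine le_of_mul_le_mul_left ?_ hτ
  linarith

/-- The weight `1 / (a τ(a))`. -/
noncomputable def wa (a : ℕ) : ℝ := 1 / (a * tau a)

lemma wa_nonneg (a : ℕ) : 0 ≤ wa a := by
  have := tau_nonneg a
  unfold wa; positivity

/-- Averaging `sum_cpairs_le` over `n ≤ x`: at least `x / (2 a b)` integers `n ≤ x` are multiples of
`a b`. -/
lemma sum_coprime_le {x y : ℕ} (hxy : y * y ≤ x) (hx : x ≠ 0) :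
    ∑ w ∈ (Finset.Icc 1 y ×ˢ Finset.Icc 1 y).filter fun w => w.1.Coprime w.2 ∧ near w.1 w.2,
      wa w.1 * wa w.2 ≤ 6 * sAvg x := by
  have hx0 : (0 : ℝ) < x := by exact_mod_cast Nat.pos_of_ne_zero hx
  set S := (Finset.Icc 1 y ×ˢ Finset.Icc 1 y).filter
    fun w => w.1.Coprime w.2 ∧ near w.1 w.2 with hS
  have h1 : ∑ w ∈ S, x / 2 * (wa w.1 * wa w.2) ≤
      ∑ v ∈ S.sigma fun w => Finset.Icc 1 (x / (w.1 * w.2)), 1 / (tau v.1.1 * tau v.1.2) := by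
    rw [Finset.sum_sigma]
    refine Finset.sum_le_sum fun w hw => ?_
    simp only [hS, Finset.mem_filter, Finset.mem_product, Finset.mem_Icc] at hw
    obtain ⟨⟨⟨ha, hay⟩, hb, hby⟩, -⟩ := hw
    have hab : w.1 * w.2 ≤ x := (Nat.mul_le_mul hay hby).trans hxy
    have ha0 : (0 : ℝ) < w.1 := by exact_mod_cast ha
    have hb0 : (0 : ℝ) < w.2 := by exact_mod_cast hb
    have hta := tau_pos (a := w.1) (by omega)
    have htb := tau_pos (a := w.2) (by omega)
    have hab0 : 0 < w.1 * w.2 := Nat.mul_pos ha hb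
    have hfl : x ≤ 2 * (x / (w.1 * w.2)) * (w.1 * w.2) := by
      have e1 := Nat.lt_div_mul_add (a := x) hab0
      have e2 := Nat.div_pos hab hab0
      nlinarith
    have hfl' : (x : ℝ) ≤ 2 * (x / (w.1 * w.2) : ℕ) * (w.1 * w.2) := by exact_mod_cast hfl
    dsimp only
    rw [Finset.sum_const, nsmul_eq_mul, Nat.card_Icc, Nat.add_sub_cancel]
    unfold wa
    calc (x : ℝ) / 2 * (1 / (w.1 * tau w.1) * (1 / (w.2 * tau w.2)))
        ≤ (2 * (x / (w.1 * w.2) : ℕ) * (w.1 * w.2)) / 2 *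
          (1 / (w.1 * tau w.1) * (1 / (w.2 * tau w.2))) := by gcongr
      _ = _ := by field_simp
  have h2 : ∑ v ∈ S.sigma fun w => Finset.Icc 1 (x / (w.1 * w.2)), 1 / (tau v.1.1 * tau v.1.2) ≤
      ∑ v ∈ (Finset.Icc 1 x).sigma fun n => cpairs n, 1 / (tau v.2.1 * tau v.2.2) := by
    refine sum_le_sum_inj (fun v => ⟨v.2 * (v.1.1 * v.1.2), v.1⟩) ?_ ?_ ?_ ?_
    · rintro ⟨⟨a, b⟩, j⟩ h
      simp only [hS, cpairs, Finset.mem_sigma, Finset.mem_filter, Finset.mem_product,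
        Finset.mem_Icc, Nat.mem_divisors] at h ⊢
      obtain ⟨⟨⟨⟨ha, hay⟩, hb, hby⟩, hc⟩, hj, hjx⟩ := h
      have hab0 : 0 < a * b := Nat.mul_pos ha hb
      have hpos : 0 < j * (a * b) := Nat.mul_pos hj hab0
      rw [Nat.le_div_iff_mul_le hab0] at hjx
      refine ⟨⟨hpos, hjx⟩, ⟨⟨Dvd.intro (j * b) (by ring), hpos.ne'⟩,
        Dvd.intro (j * a) (by ring), hpos.ne'⟩, hc, Nat.dvd_mul_left _ _⟩
    · rintro ⟨⟨a, b⟩, j⟩ h ⟨⟨a', b'⟩, j'⟩ h' heq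
      simp only [hS, Finset.coe_sigma, Set.mem_sigma_iff, Finset.mem_coe, Finset.mem_filter,
        Finset.mem_product, Finset.mem_Icc, Sigma.mk.injEq, heq_eq_eq, Prod.mk.injEq] at h h' heq
      obtain ⟨e, rfl, rfl⟩ := heq
      have hab0 : 0 < a * b := Nat.mul_pos h.1.1.1.1 h.1.1.2.1
      have := Nat.eq_of_mul_eq_mul_right hab0 e
      subst this
      rfl
    · rintro ⟨⟨a, b⟩, j⟩ _
      exact le_rfl
    · rintro ⟨n, w⟩ _
      have := tau_nonneg w.1
      have := tau_nonneg w.2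
      positivity
  have h3 : ∑ v ∈ (Finset.Icc 1 x).sigma fun n => cpairs n, 1 / (tau v.2.1 * tau v.2.2) ≤
      3 * ∑ n ∈ Finset.Icc 1 x, (hooleyDelta n : ℝ) := by
    rw [Finset.sum_sigma, Finset.mul_sum]
    exact Finset.sum_le_sum fun n hn => sum_cpairs_le (by have := Finset.mem_Icc.1 hn; omega)
  rw [← Finset.mul_sum] at h1
  unfold sAvg
  rw [mul_div_assoc', le_div_iff₀ hx0]
  linarith

lemma exists_sum_inv_sq_le : ∃ Z : ℝ, 0 < Z ∧
    ∀ x : ℕ, ∑ g ∈ Finset.Icc 1 x, 1 / (g : ℝ) ^ 2 ≤ Z := by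
  have hs : Summable fun n : ℕ => 1 / (n : ℝ) ^ 2 := Real.summable_one_div_nat_pow.2 (by norm_num)
  have h0 : 0 ≤ ∑' n : ℕ, 1 / (n : ℝ) ^ 2 := tsum_nonneg fun n => by positivity
  refine ⟨∑' n : ℕ, 1 / (n : ℝ) ^ 2 + 1, by linarith, fun x => ?_⟩
  have := hs.sum_le_tsum (Finset.Icc 1 x) fun n _ => by positivity
  linarith

lemma wa_mul_le {g a : ℕ} (hg : g ≠ 0) (ha : a ≠ 0) : wa (g * a) ≤ 1 / g * wa a := by
  have h1 := tau_pos ha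
  have hg0 : (0 : ℝ) < g := by exact_mod_cast Nat.pos_of_ne_zero hg
  have ha0 : (0 : ℝ) < a := by exact_mod_cast Nat.pos_of_ne_zero ha
  have h2 : tau a ≤ tau (g * a) := by
    unfold tau
    exact_mod_cast Finset.card_le_card (Nat.divisors_subset_of_dvd (by positivity)
      (Nat.dvd_mul_left a g))
  unfold wa
  push_cast
  calc 1 / ((g : ℝ) * a * tau (g * a)) ≤ 1 / (g * a * tau a) := by gcongr
    _ = _ := by field_simp

lemma eq_of_div_eq_div {a b g h : ℕ} (e : g = h) (ha : g ∣ a) (hb : h ∣ b)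
    (hab : a / g = b / h) : a = b := by
  rw [← Nat.div_mul_cancel ha, ← Nat.div_mul_cancel hb, hab, e]

/-- Removing the coprimality condition: divide a near pair by its greatest common divisor `g`, at the
cost of a factor `1 / g²`. -/
lemma sum_near_le (y : ℕ) :
    ∑ w ∈ (Finset.Icc 1 y ×ˢ Finset.Icc 1 y).filter fun w => near w.1 w.2, wa w.1 * wa w.2 ≤
      (∑ g ∈ Finset.Icc 1 y, 1 / (g : ℝ) ^ 2) *
      ∑ w ∈ (Finset.Icc 1 y ×ˢ Finset.Icc 1 y).filter fun w => w.1.Coprime w.2 ∧ near w.1 w.2,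
        wa w.1 * wa w.2 := by
  rw [Finset.sum_mul_sum, ← Finset.sum_product']
  refine sum_le_sum_inj (fun w => (w.1.gcd w.2, w.1 / w.1.gcd w.2, w.2 / w.1.gcd w.2)) ?_ ?_ ?_ ?_
  · rintro ⟨a, b⟩ h
    simp only [Finset.mem_product, Finset.mem_filter, Finset.mem_Icc] at h ⊢
    obtain ⟨⟨⟨ha, hay⟩, hb, hby⟩, hab⟩ := h
    have hg : 0 < a.gcd b := Nat.gcd_pos_of_pos_left b ha
    obtain ⟨a', ha'⟩ := Nat.gcd_dvd_left a b
    obtain ⟨b', hb'⟩ := Nat.gcd_dvd_right a b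
    have ea : a / a.gcd b = a' := Nat.div_eq_of_eq_mul_right hg ha'
    have eb : b / a.gcd b = b' := Nat.div_eq_of_eq_mul_right hg hb'
    refine ⟨⟨hg, (Nat.gcd_le_left b ha).trans hay⟩, ⟨⟨Nat.div_pos (Nat.gcd_le_left b ha) hg,
      (Nat.div_le_self _ _).trans hay⟩, Nat.div_pos (Nat.le_of_dvd hb (Nat.gcd_dvd_right a b)) hg,
      (Nat.div_le_self _ _).trans hby⟩, Nat.coprime_div_gcd_div_gcd hg, ?_⟩
    unfold near at hab ⊢
    have ha0 : (a : ℝ) ≠ 0 := by positivity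
    have hb0 : (b : ℝ) ≠ 0 := by positivity
    have hg0 : ((a.gcd b : ℕ) : ℝ) ≠ 0 := by positivity
    rw [Nat.cast_div (Nat.gcd_dvd_left a b) hg0, Nat.cast_div (Nat.gcd_dvd_right a b) hg0,
      Real.log_div ha0 hg0, Real.log_div hb0 hg0]
    simpa using hab
  · rintro ⟨a, b⟩ h ⟨a', b'⟩ h' heq
    simp only [Prod.mk.injEq] at heq ⊢
    obtain ⟨e, e1, e2⟩ := heq
    exact ⟨eq_of_div_eq_div e (Nat.gcd_dvd_left a b) (Nat.gcd_dvd_left a' b') e1,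
      eq_of_div_eq_div e (Nat.gcd_dvd_right a b) (Nat.gcd_dvd_right a' b') e2⟩
  · rintro ⟨a, b⟩ h
    simp only [Finset.mem_product, Finset.mem_filter, Finset.mem_Icc] at h ⊢
    obtain ⟨⟨⟨ha, hay⟩, hb, hby⟩, hab⟩ := h
    have hg : 0 < a.gcd b := Nat.gcd_pos_of_pos_left b ha
    have pa := Nat.div_pos (Nat.gcd_le_left b ha) hg
    have pb := Nat.div_pos (Nat.le_of_dvd hb (Nat.gcd_dvd_right a b)) hg
    have h1 := wa_mul_le hg.ne' pa.ne'
    have h2 := wa_mul_le hg.ne' pb.ne'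
    rw [Nat.mul_div_cancel' (Nat.gcd_dvd_left a b)] at h1
    rw [Nat.mul_div_cancel' (Nat.gcd_dvd_right a b)] at h2
    calc wa a * wa b ≤ (1 / (a.gcd b : ℕ) * wa (a / a.gcd b)) *
          (1 / (a.gcd b : ℕ) * wa (b / a.gcd b)) :=
          mul_le_mul h1 h2 (wa_nonneg _) (mul_nonneg (by positivity) (wa_nonneg _))
      _ = _ := by ring
  · rintro ⟨g, a, b⟩ _
    have := wa_nonneg a
    have := wa_nonneg b
    positivity

/-! ### The lower bound -/

lemma log_le_sum_inv (z : ℕ) : Real.log (z + 1) ≤ ∑ n ∈ Finset.Icc 1 z, 1 / (n : ℝ) := by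
  have h := log_add_one_le_harmonic z
  rw [harmonic_eq_sum_Icc] at h
  push_cast at h
  simpa [one_div] using h

/-- The harmonic sum is controlled by its squarefree part, by `n = a² b`. -/
lemma sum_inv_le (z : ℕ) : ∑ n ∈ Finset.Icc 1 z, 1 / (n : ℝ) ≤
    (∑ g ∈ Finset.Icc 1 z, 1 / (g : ℝ) ^ 2) *
      ∑ n ∈ (Finset.Icc 1 z).filter Squarefree, 1 / (n : ℝ) := by
  refine (sum_le_sum_sq_mul z (F := fun n => 1 / (n : ℝ)) fun n => by positivity).trans ?_
  rw [Finset.sum_mul]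
  refine Finset.sum_le_sum fun a _ => ?_
  rw [Finset.mul_sum]
  refine le_trans (le_of_eq ?_) (Finset.sum_le_sum_of_subset_of_nonneg
    (Finset.filter_subset_filter _ (Finset.Icc_subset_Icc_right (Nat.div_le_self z (a ^ 2))))
    fun n _ _ => by positivity)
  refine Finset.sum_congr rfl fun b _ => ?_
  push_cast
  rw [one_div_mul_one_div]

/-- For squarefree `n`, `1 / n` is the sum of `wa d * wa (n / d)` over `d ∣ n`. -/
lemma sum_inv_sqf_le (z : ℕ) : ∑ n ∈ (Finset.Icc 1 z).filter Squarefree, 1 / (n : ℝ) ≤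
    (∑ a ∈ Finset.Icc 1 z, wa a) ^ 2 := by
  rw [sq]
  refine le_trans ?_ (sum_divisors_le z wa_nonneg wa_nonneg)
  rw [Finset.sum_filter]
  refine Finset.sum_le_sum fun n hn => ?_
  have hn1 := (Finset.mem_Icc.1 hn).1
  split_ifs with hsq
  · have hn0 : (0 : ℝ) < n := by exact_mod_cast hn1
    have hτ := tau_pos (a := n) (by omega)
    have e : ∀ d ∈ n.divisors, wa d * wa (n / d) = 1 / (n * tau n) := by
      intro d hd
      obtain ⟨k, hk⟩ := (Nat.mem_divisors.1 hd).1
      have hd0 : 0 < d := Nat.pos_of_mem_divisors hd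
      have hkd : n / d = k := Nat.div_eq_of_eq_mul_right hd0 hk
      have hc : d.Coprime k := Nat.coprime_of_squarefree_mul (hk ▸ hsq)
      have ht : tau n = tau d * tau k := by
        unfold tau
        rw [hk, hc.card_divisors_mul]
        push_cast
        rfl
      have hnr : (n : ℝ) = d * k := by exact_mod_cast hk
      rw [hkd, ht, hnr]
      unfold wa
      rw [one_div_mul_one_div]
      congr 1
      ring
    rw [Finset.sum_congr rfl e, Finset.sum_const, nsmul_eq_mul]
    change _ ≤ tau n * _
    apply le_of_eq
    field_simp
  · exact Finset.sum_nonneg fun d _ => mul_nonneg (wa_nonneg _) (wa_nonneg _)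

/-- The part of `∑ 1 / (a τ(a))` with `⌊log a⌋ = k`. -/
noncomputable def sk (y k : ℕ) : ℝ :=
  ∑ a ∈ (Finset.Icc 1 y).filter fun a : ℕ => ⌊Real.log a⌋₊ = k, wa a

/-- Two integers with the same `⌊log a⌋` are near each other. -/
lemma sum_sk_sq_le (y K : ℕ) : ∑ k ∈ Finset.range K, sk y k ^ 2 ≤
    ∑ w ∈ (Finset.Icc 1 y ×ˢ Finset.Icc 1 y).filter fun w => near w.1 w.2,
      wa w.1 * wa w.2 := by
  have h1 : ∑ k ∈ Finset.range K, sk y k ^ 2 = ∑ v ∈ (Finset.range K).sigma fun k =>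
      ((Finset.Icc 1 y).filter fun a : ℕ => ⌊Real.log a⌋₊ = k) ×ˢ
      ((Finset.Icc 1 y).filter fun a : ℕ => ⌊Real.log a⌋₊ = k), wa v.2.1 * wa v.2.2 := by
    rw [Finset.sum_sigma]
    refine Finset.sum_congr rfl fun k _ => ?_
    rw [sq]
    unfold sk
    rw [Finset.sum_mul_sum, ← Finset.sum_product']
  rw [h1]
  refine sum_le_sum_inj (fun v => v.2) ?_ ?_ (fun _ _ => le_rfl)
    fun w _ => mul_nonneg (wa_nonneg _) (wa_nonneg _)
  · rintro ⟨k, a, b⟩ h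
    simp only [Finset.mem_sigma, Finset.mem_product, Finset.mem_filter] at h ⊢
    obtain ⟨-, ⟨ha, hak⟩, hb, hbk⟩ := h
    refine ⟨⟨ha, hb⟩, ?_⟩
    have a1 := Nat.floor_le (Real.log_natCast_nonneg a)
    have a2 := Nat.lt_floor_add_one (Real.log a)
    have b1 := Nat.floor_le (Real.log_natCast_nonneg b)
    have b2 := Nat.lt_floor_add_one (Real.log b)
    rw [hak] at a1 a2
    rw [hbk] at b1 b2
    unfold near
    rw [abs_le]
    constructor <;> linarith
  · rintro ⟨k, a, b⟩ h ⟨k', a', b'⟩ h' heq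
    simp only [Finset.coe_sigma, Set.mem_sigma_iff, Finset.mem_coe, Finset.mem_product,
      Finset.mem_filter, Prod.mk.injEq] at h h' heq
    obtain ⟨rfl, rfl⟩ := heq
    have : k = k' := h.2.1.2.symm.trans h'.2.1.2
    subst this
    rfl

/-- The sum of `1 / (a τ(a))` over `a < e ^ m` is at least `√(m / Z)`. -/
lemma le_sum_sk {y m : ℕ} {Z : ℝ} (hZ0 : 0 < Z)
    (hZ : ∀ x : ℕ, ∑ g ∈ Finset.Icc 1 x, 1 / (g : ℝ) ^ 2 ≤ Z)
    (hm : ∀ a : ℕ, (a : ℝ) < Real.exp m → a ≤ y) :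
    Real.sqrt (m / Z) ≤ ∑ k ∈ Finset.range m, sk y k := by
  set z := ⌈Real.exp m⌉₊ - 1 with hz
  have hc : 0 < ⌈Real.exp m⌉₊ := Nat.ceil_pos.2 (Real.exp_pos _)
  have hlt : ∀ a ∈ Finset.Icc 1 z, (a : ℝ) < Real.exp m := fun a ha => by
    rw [← Nat.lt_ceil]
    have := (Finset.mem_Icc.1 ha).2
    omega
  have h1 : ∑ a ∈ Finset.Icc 1 z, wa a ≤ ∑ k ∈ Finset.range m, sk y k := by
    unfold sk
    rw [Finset.sum_sigma']
    refine sum_le_sum_inj (fun a => ⟨⌊Real.log a⌋₊, a⟩) ?_ ?_ (fun _ _ => le_rfl)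
      fun _ _ => wa_nonneg _
    · intro a ha
      have ha1 := (Finset.mem_Icc.1 ha).1
      have ha0 : (0 : ℝ) < a := by exact_mod_cast ha1
      simp only [Finset.mem_sigma, Finset.mem_range, Finset.mem_filter, Finset.mem_Icc, and_true]
      refine ⟨?_, ha1, hm a (hlt a ha)⟩
      rw [Nat.floor_lt (Real.log_natCast_nonneg a), Real.log_lt_iff_lt_exp ha0]
      exact hlt a ha
    · intro a _ b _ h
      simp only [Sigma.mk.injEq, heq_eq_eq] at h
      exact h.2
  refine le_trans ?_ h1
  have hW : 0 ≤ ∑ a ∈ Finset.Icc 1 z, wa a := Finset.sum_nonneg fun a _ => wa_nonneg a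
  refine Real.sqrt_le_iff.2 ⟨hW, ?_⟩
  rw [div_le_iff₀ hZ0]
  have h2 : (m : ℝ) ≤ Real.log (z + 1) := by
    rw [Real.le_log_iff_exp_le (by positivity)]
    have e : ((z + 1 : ℕ) : ℝ) = (⌈Real.exp m⌉₊ : ℝ) := by
      congr 1
      omega
    push_cast at e
    rw [e]
    exact Nat.le_ceil _
  calc (m : ℝ) ≤ Z * ∑ n ∈ (Finset.Icc 1 z).filter Squarefree, 1 / (n : ℝ) := by
        refine h2.trans ((log_le_sum_inv z).trans ((sum_inv_le z).trans ?_))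
        have : 0 ≤ ∑ n ∈ (Finset.Icc 1 z).filter Squarefree, 1 / (n : ℝ) :=
          Finset.sum_nonneg fun n _ => by positivity
        gcongr
        exact hZ z
    _ ≤ Z * (∑ a ∈ Finset.Icc 1 z, wa a) ^ 2 := by
        gcongr
        exact sum_inv_sqf_le z
    _ = _ := mul_comm _ _

/-- Abel summation against a decreasing weight, in the form of an inequality. -/
lemma abel_le {f v : ℕ → ℝ} {K : ℕ} (hv : ∀ k, v (k + 1) ≤ v k)
    (hF : ∀ n ≤ K, 0 ≤ ∑ k ∈ Finset.range n, f k) :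
    ∀ n ≤ K, (∑ k ∈ Finset.range n, f k) * v n ≤ ∑ k ∈ Finset.range n, f k * v k := by
  intro n
  induction n with
  | zero => simp
  | succ n ih =>
    intro hn
    have h1 := ih (by omega)
    have h2 := mul_le_mul_of_nonneg_left (hv n) (hF (n + 1) hn)
    rw [Finset.sum_range_succ] at h2 ⊢
    rw [Finset.sum_range_succ]
    linarith

/-- If the partial sums of `s` are at least `√(m / Z)`, then `∑ s_k² ≥ (log (K + 1)) / (4 Z)`,
by duality with the sequence `1 / √(k + 1)`. -/
lemma log_le_sum_sq {s : ℕ → ℝ} {K : ℕ} {Z : ℝ} (hZ0 : 0 < Z)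
    (hs : ∀ m ≤ K, Real.sqrt (m / Z) ≤ ∑ k ∈ Finset.range m, s k) :
    Real.log (K + 1) ≤ 4 * Z * ∑ k ∈ Finset.range K, s k ^ 2 := by
  set v : ℕ → ℝ := fun k => 1 / Real.sqrt (k + 1) with hv
  set e : ℕ → ℝ := fun k => Real.sqrt ((k + 1 : ℕ) / Z) - Real.sqrt (k / Z) with he
  set H : ℝ := ∑ k ∈ Finset.range K, 1 / ((k : ℝ) + 1) with hH
  have hH0 : 0 ≤ H := Finset.sum_nonneg fun k _ => by positivity
  have hlogH : Real.log (K + 1) ≤ H := by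
    have h := log_add_one_le_harmonic K
    unfold harmonic at h
    push_cast at h
    simpa [hH, one_div] using h
  have hesum : ∀ m, ∑ k ∈ Finset.range m, e k = Real.sqrt (m / Z) := by
    intro m
    have := Finset.sum_range_sub (fun k : ℕ => Real.sqrt (k / Z)) m
    simpa [he] using this
  have habel := abel_le (f := fun k => s k - e k) (v := v) (K := K)
    (fun k => by
      simp only [hv]
      gcongr
      linarith)
    (fun n hn => by
      rw [Finset.sum_sub_distrib, hesum]
      linarith [hs n hn]) K le_rfl
  have hnn : 0 ≤ (∑ k ∈ Finset.range K, (s k - e k)) * v K := by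
    refine mul_nonneg ?_ (by simp only [hv]; positivity)
    rw [Finset.sum_sub_distrib, hesum]
    linarith [hs K le_rfl]
  have h1 : ∑ k ∈ Finset.range K, e k * v k ≤ ∑ k ∈ Finset.range K, s k * v k := by
    have := hnn.trans habel
    simp only [sub_mul, Finset.sum_sub_distrib] at this
    linarith
  have hZs : 0 < Real.sqrt Z := Real.sqrt_pos.2 hZ0
  have h2 : 1 / (2 * Real.sqrt Z) * H ≤ ∑ k ∈ Finset.range K, e k * v k := by
    rw [hH, Finset.mul_sum]
    refine Finset.sum_le_sum fun k _ => ?_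
    simp only [he, hv]
    push_cast
    rw [Real.sqrt_div (by positivity), Real.sqrt_div (by positivity)]
    set p := Real.sqrt ((k : ℝ) + 1) with hp
    set r := Real.sqrt (k : ℝ) with hr
    have hp0 : 0 < p := Real.sqrt_pos.2 (by positivity)
    have hp2 : p ^ 2 = k + 1 := Real.sq_sqrt (by positivity)
    have hr2 : r ^ 2 = k := Real.sq_sqrt (by positivity)
    have hr0 : 0 ≤ r := Real.sqrt_nonneg _
    have hrp : r ≤ p := Real.sqrt_le_sqrt (by linarith)
    rw [← hp2]
    have h3 : 1 ≤ 2 * p * (p - r) := by nlinarith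
    have e1 : (p / Real.sqrt Z - r / Real.sqrt Z) * (1 / p) =
        (2 * p * (p - r)) * (1 / (2 * Real.sqrt Z) * (1 / p ^ 2)) := by
      field_simp
    rw [e1]
    exact le_mul_of_one_le_left (by positivity) h3
  have hcs := Finset.sum_mul_sq_le_sq_mul_sq (Finset.range K) s v
  have hv2 : ∑ k ∈ Finset.range K, v k ^ 2 = H := by
    refine Finset.sum_congr rfl fun k _ => ?_
    simp only [hv]
    rw [div_pow, one_pow, Real.sq_sqrt (by positivity)]
  rw [hv2] at hcs
  have h4 : (1 / (2 * Real.sqrt Z) * H) ^ 2 ≤ (∑ k ∈ Finset.range K, s k ^ 2) * H := by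
    refine le_trans ?_ hcs
    have := h2.trans h1
    gcongr
  have h5 : (1 / (2 * Real.sqrt Z) * H) ^ 2 = H * H / (4 * Z) := by
    rw [mul_pow, div_pow, mul_pow, Real.sq_sqrt hZ0.le]
    ring
  rw [h5, div_le_iff₀ (by positivity)] at h4
  refine hlogH.trans ?_
  have hS : 0 ≤ ∑ k ∈ Finset.range K, s k ^ 2 := Finset.sum_nonneg fun k _ => sq_nonneg _
  rcases hH0.eq_or_lt with h0 | h0
  · rw [← h0]; positivity
  · refine le_of_mul_le_mul_right ?_ h0
    linarith

/-- The lower bound, from pairs `a, b ≤ √x`. -/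
lemma lower_bound : ∃ c' : ℝ, 0 < c' ∧ ∀ᶠ x : ℕ in atTop,
    c' * Real.log (Real.log x) ≤ sAvg x := by
  obtain ⟨Z, hZ0, hZ⟩ := exists_sum_inv_sq_le
  have ht : Tendsto (fun x : ℕ => Real.log (Real.log x)) atTop atTop :=
    Real.tendsto_log_atTop.comp (Real.tendsto_log_atTop.comp tendsto_natCast_atTop_atTop)
  refine ⟨1 / (48 * Z ^ 2), by positivity, ?_⟩
  filter_upwards [eventually_ge_atTop 3, ht.eventually_ge_atTop 2] with x hx ht2
  have hx0 : (0 : ℝ) < x := by positivity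
  have hL : 0 < Real.log x := Real.log_pos (by
    have : (3 : ℝ) ≤ x := by exact_mod_cast hx
    linarith)
  set K := ⌊Real.log x / 2⌋₊ with hK
  set y := Nat.sqrt x with hy
  have hKx : (K : ℝ) ≤ Real.log x / 2 := Nat.floor_le (by positivity)
  have hsk : ∀ m ≤ K, Real.sqrt (m / Z) ≤ ∑ k ∈ Finset.range m, sk y k := by
    intro m hm
    refine le_sum_sk hZ0 hZ fun a ha => ?_
    rw [hy, Nat.le_sqrt]
    have h1 : Real.exp m ≤ Real.exp (Real.log x / 2) := by
      rw [Real.exp_le_exp]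
      exact le_trans (by exact_mod_cast hm) hKx
    have h2 : Real.exp (Real.log x / 2) * Real.exp (Real.log x / 2) = x := by
      rw [← Real.exp_add, add_halves, Real.exp_log hx0]
    have h3 : (a : ℝ) * a ≤ x := by
      rw [← h2]
      exact mul_self_le_mul_self (Nat.cast_nonneg a) (ha.le.trans h1)
    exact_mod_cast h3
  have h1 := log_le_sum_sq hZ0 hsk
  have h2 := sum_sk_sq_le y K
  have h3 := sum_near_le y
  have h4 := sum_coprime_le (Nat.sqrt_le x) (by omega : x ≠ 0)
  rw [← hy] at h4
  have hs0 : 0 ≤ sAvg x := by unfold sAvg; positivity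
  have h5 : Real.log (K + 1) ≤ 4 * Z * (Z * (6 * sAvg x)) := by
    refine h1.trans ?_
    gcongr
    refine h2.trans (h3.trans ?_)
    refine (mul_le_mul_of_nonneg_left h4 (Finset.sum_nonneg fun g _ => by positivity)).trans ?_
    gcongr
    exact hZ y
  have h6 : Real.log (Real.log x) / 2 ≤ Real.log (K + 1) := by
    have h7 : Real.log (Real.log x / 2) ≤ Real.log (K + 1) :=
      Real.log_le_log (by positivity) (Nat.lt_floor_add_one _).le
    rw [Real.log_div hL.ne' (by norm_num)] at h7
    have := Real.log_two_lt_d9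
    linarith
  rw [div_mul_eq_mul_div, div_le_iff₀ (by positivity)]
  linarith

theorem hooleyDelta_average_bounds :
    ∃ c' : ℝ, 0 < c' ∧ ∃ c : ℝ, 0 < c ∧ ∀ᶠ x : ℕ in atTop,
      c' * Real.log (Real.log x) ≤ sAvg x ∧
      sAvg x ≤ Real.exp (c * Real.sqrt
        (Real.log (Real.log x) * Real.log (Real.log (Real.log x)))) := by
  obtain ⟨c', hc', h₁⟩ := lower_bound
  obtain ⟨c, hc, h₂⟩ := upper_bound
  exact ⟨c', hc', c, hc, h₁.and h₂⟩
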